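/- arXiv:2012.08162 — 11 statements merged into one kernel-verified Lean document; each statement's English description precedes it below -/
import Mathlib

section
/- Let X be a real normed linear space and let x, y be unit vectors in X with x ⊥_D^ε y for some ε ∈ [0,1). Then there exist ε₁ > 0, ε₂ > 0 and ε₃ ∈ (0,1) such that z ⊥_D^{ε₃} w for every unit vector z with ‖z − x‖ < ε₁ and every unit vector w with ‖w − y‖ < ε₂. -/
open Set Metric

section Defs

variable {E : Type*} [NormedAddCommGroup E] [NormedSpace ℝ E]

/-- Birkhoff-James orthogonality: `x ⊥_B y` iff `‖x + t • y‖ ≥ ‖x‖` for all real `t`. -/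
def BJOrth (x y : E) : Prop := ∀ t : ℝ, ‖x‖ ≤ ‖x + t • y‖

/-- Dragomir-type approximate orthogonality: `x ⊥_D^ε y` iff
`‖x + t • y‖ ≥ √(1 - ε²) ‖x‖` for all real `t`. -/
def DOrth (ε : ℝ) (x y : E) : Prop :=
  ∀ t : ℝ, Real.sqrt (1 - ε ^ 2) * ‖x‖ ≤ ‖x + t • y‖

/-- Chmieliński-type approximate orthogonality: `x ⊥_B^ε y` iff
`‖x + t • y‖² ≥ ‖x‖² - 2 ε ‖x‖ ‖t • y‖` for all real `t`. -/
def BOrth (ε : ℝ) (x y : E) : Prop :=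
  ∀ t : ℝ, ‖x‖ ^ 2 - 2 * ε * ‖x‖ * ‖t • y‖ ≤ ‖x + t • y‖ ^ 2

/-- The set of supporting functionals at `x`. -/
def SuppJ (x : E) : Set (E →L[ℝ] ℝ) := {f | ‖f‖ = 1 ∧ f x = ‖x‖}

/-- The local property (P) at `x`: there is no unit vector `y` with `x ⊥_B y` such that
every supporting functional of `y` (or its negative) supports `x`. -/
def LocalP (x : E) : Prop :=
  ¬ ∃ y : E, ‖y‖ = 1 ∧ BJOrth x y ∧ ∀ f ∈ SuppJ y, f ∈ SuppJ x ∨ -f ∈ SuppJ x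

end Defs

open scoped Topology

section Perturbation

variable {𝕜 E : Type*} [NormedField 𝕜] [SeminormedAddCommGroup E] [NormedSpace 𝕜 E]

lemma norm_le_norm_add_of_two_mul_norm_le {u v : E} (h : 2 * ‖u‖ ≤ ‖v‖) :
    ‖u‖ ≤ ‖u + v‖ := by
  linarith [norm_le_add_norm_add' u v]

lemma norm_add_smul_sub_le_norm_add_smul (x y z w : E) (t : 𝕜) :
    ‖x + t • y‖ - ‖z - x‖ - ‖t‖ * ‖w - y‖ ≤ ‖z + t • w‖ := by
  have htriangle : ‖x + t • y‖ ≤ ‖z + t • w‖ + ‖z - x‖ + ‖t • (w - y)‖ :=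
    calc ‖x + t • y‖ = ‖z + t • w - (z - x) - t • (w - y)‖ := by congr 1; module
      _ ≤ ‖z + t • w‖ + ‖z - x‖ + ‖t • (w - y)‖ := norm_sub_le_of_le (norm_sub_le _ _) le_rfl
  rw [norm_smul] at htriangle
  linarith

/-- If `‖t • w‖` is at least `2 * ‖z‖`, the triangle inequality suffices. All other `t` satisfy
`‖t‖ < 2 * ‖z‖ / ‖w‖`, a bound continuous in `(z, w)` near `(x, y)`, so the perturbation error
tends to `0` uniformly in these `t`. -/
theorem eventually_forall_mul_norm_le_norm_add_smul {c d : ℝ} {x y : E}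
    (hx : 0 < ‖x‖) (hy : 0 < ‖y‖) (hdc : d < c) (h : ∀ t : 𝕜, c * ‖x‖ ≤ ‖x + t • y‖) :
    ∀ᶠ p : E × E in 𝓝 (x, y), ∀ t : 𝕜, d * ‖p.1‖ ≤ ‖p.1 + t • p.2‖ := by
  have hd : d ≤ 1 := by
    have hc : c * ‖x‖ ≤ 1 * ‖x‖ := by simpa using h 0
    exact hdc.le.trans (le_of_mul_le_mul_right hc hx)
  have hsnd : ∀ᶠ p : E × E in 𝓝 (x, y), 0 < ‖p.2‖ :=
    continuousAt_snd.norm.eventually_const_lt hy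
  have herror : ∀ᶠ p : E × E in 𝓝 (x, y),
      d * ‖p.1‖ < c * ‖x‖ - ‖p.1 - x‖ - 2 * ‖p.1‖ / ‖p.2‖ * ‖p.2 - y‖ := by
    refine ContinuousAt.eventually_lt (by fun_prop) (by fun_prop (disch := exact hy.ne')) ?_
    simpa using mul_lt_mul_of_pos_right hdc hx
  filter_upwards [hsnd, herror] with ⟨z, w⟩ hw hzw t
  rcases le_or_gt (2 * ‖z‖) ‖t • w‖ with hlarge | hsmall
  · calc d * ‖z‖ ≤ ‖z‖ := mul_le_of_le_one_left (norm_nonneg z) hd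
      _ ≤ ‖z + t • w‖ := norm_le_norm_add_of_two_mul_norm_le hlarge
  · have ht : ‖t‖ ≤ 2 * ‖z‖ / ‖w‖ := by
      rw [norm_smul] at hsmall
      exact ((lt_div_iff₀ hw).2 hsmall).le
    calc d * ‖z‖ ≤ c * ‖x‖ - ‖z - x‖ - 2 * ‖z‖ / ‖w‖ * ‖w - y‖ := hzw.le
      _ ≤ ‖x + t • y‖ - ‖z - x‖ - ‖t‖ * ‖w - y‖ := by gcongr; exact h t
      _ ≤ ‖z + t • w‖ := norm_add_smul_sub_le_norm_add_smul x y z w t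

end Perturbation

theorem stmt_0_general {X : Type*} [NormedAddCommGroup X] [NormedSpace ℝ X] {x y : X}
    (hx : x ≠ 0) (hy : y ≠ 0) {ε ε' : ℝ} (hε : 0 ≤ ε) (hεε' : ε < ε') (hε' : ε' ≤ 1)
    (h : DOrth ε x y) : ∀ᶠ p : X × X in 𝓝 (x, y), DOrth ε' p.1 p.2 := by
  have hsqrt : √(1 - ε' ^ 2) < √(1 - ε ^ 2) :=
    Real.sqrt_lt_sqrt (sub_nonneg.2 (pow_le_one₀ (hε.trans hεε'.le) hε')) (by gcongr)
  exact eventually_forall_mul_norm_le_norm_add_smul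
    (norm_pos_iff.2 hx) (norm_pos_iff.2 hy) hsqrt h

theorem stmt_0 {X : Type*} [NormedAddCommGroup X] [NormedSpace ℝ X]
    (x y : X) (hx : ‖x‖ = 1) (hy : ‖y‖ = 1)
    (ε : ℝ) (hε : ε ∈ Set.Ico (0 : ℝ) 1) (h : DOrth ε x y) :
    ∃ ε₁ > (0 : ℝ), ∃ ε₂ > (0 : ℝ), ∃ ε₃ ∈ Set.Ioo (0 : ℝ) 1,
      ∀ z : X, ‖z‖ = 1 → ‖z - x‖ < ε₁ →
        ∀ w : X, ‖w‖ = 1 → ‖w - y‖ < ε₂ → DOrth ε₃ z w := by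
  obtain ⟨ε₃, hεε₃, hε₃⟩ := exists_between hε.2
  obtain ⟨δ, hδ, hball⟩ := Metric.eventually_nhds_iff.1 <| stmt_0_general
    (norm_ne_zero_iff.1 (hx ▸ one_ne_zero)) (norm_ne_zero_iff.1 (hy ▸ one_ne_zero))
    hε.1 hεε₃ hε₃.le h
  refine ⟨δ, hδ, δ, hδ, ε₃, ⟨hε.1.trans_lt hεε₃, hε₃⟩, fun z _ hzx w _ hwy ↦ ?_⟩
  exact @hball (z, w) (max_lt (by rwa [dist_eq_norm]) (by rwa [dist_eq_norm]))
end

section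
/- Let X be a real normed linear space and let x, y be unit vectors in X with x ≠ y and x ≠ −y. Then there exists ε ∈ [0,1) such that x ⊥_D^ε y. -/
/-! The relation `x ⊥_D^ε y` says that `√(1 - ε²) ‖x‖` is at most the distance from `x` to the line
`ℝ y`. This line is closed, so the distance is positive as soon as `x ∉ ℝ y`, and one solves for
`ε`. A unit vector on the line through a unit vector `y` is `±y`. -/

open Set Metric

section NormedSpace

variable {E : Type*} [NormedAddCommGroup E] [NormedSpace ℝ E] {x y : E}

theorem eq_or_eq_neg_of_mem_span_singleton_of_norm_eq (hmem : x ∈ Submodule.span ℝ {y})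
    (hnorm : ‖x‖ = ‖y‖) : x = y ∨ x = -y := by
  obtain ⟨a, rfl⟩ := Submodule.mem_span_singleton.1 hmem
  rcases eq_or_ne y 0 with rfl | hy
  · exact Or.inl (smul_zero a)
  · have ha : |a| = 1 := by
      rwa [norm_smul, Real.norm_eq_abs, mul_eq_right₀ (norm_ne_zero_iff.2 hy)] at hnorm
    rcases eq_or_eq_neg_of_abs_eq ha with rfl | rfl
    · exact Or.inl (one_smul ℝ y)
    · exact Or.inr (neg_one_smul ℝ y)

theorem dOrth_iff_le_infDist_span_singleton {ε : ℝ} :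
    DOrth ε x y ↔ √(1 - ε ^ 2) * ‖x‖ ≤ infDist x (Submodule.span ℝ {y} : Set E) := by
  rw [le_infDist (Submodule.nonempty _)]
  constructor
  · intro h z hz
    obtain ⟨a, rfl⟩ := Submodule.mem_span_singleton.1 hz
    simpa only [dist_eq_norm, neg_smul, ← sub_eq_add_neg] using h (-a)
  · intro h t
    simpa only [dist_eq_norm, neg_smul, sub_neg_eq_add] using
      h (Submodule.smul_mem _ (-t) (Submodule.mem_span_singleton_self y))

end NormedSpace

theorem exists_mem_Ico_sqrt_one_sub_sq_eq {c : ℝ} (hc : c ∈ Ioc 0 1) :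
    ∃ ε ∈ Ico (0 : ℝ) 1, √(1 - ε ^ 2) = c := by
  have hsq_pos : 0 < c ^ 2 := pow_pos hc.1 2
  have hsq_le : c ^ 2 ≤ 1 := pow_le_one₀ hc.1.le hc.2
  refine ⟨√(1 - c ^ 2), ⟨Real.sqrt_nonneg _, ?_⟩, ?_⟩
  · rw [Real.sqrt_lt' one_pos]
    linarith
  · rw [Real.sq_sqrt (sub_nonneg.2 hsq_le), sub_sub_cancel, Real.sqrt_sq hc.1.le]

theorem stmt_1_general {X : Type*} [NormedAddCommGroup X] [NormedSpace ℝ X] {x y : X}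
    (h : x ∉ Submodule.span ℝ {y}) : ∃ ε ∈ Ico (0 : ℝ) 1, DOrth ε x y := by
  set d := infDist x (Submodule.span ℝ {y} : Set X)
  have hd_pos : 0 < d :=
    ((Submodule.closed_of_finiteDimensional _).notMem_iff_infDist_pos (Submodule.nonempty _)).1 h
  have hd_le : d ≤ ‖x‖ := by
    simpa only [dist_zero_right] using
      infDist_le_dist_of_mem (Submodule.zero_mem (Submodule.span ℝ {y}))
  have hx : 0 < ‖x‖ := hd_pos.trans_le hd_le
  obtain ⟨ε, hε, hsqrt⟩ := exists_mem_Ico_sqrt_one_sub_sq_eq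
    (c := d / ‖x‖) ⟨div_pos hd_pos hx, (div_le_one hx).2 hd_le⟩
  refine ⟨ε, hε, dOrth_iff_le_infDist_span_singleton.2 ?_⟩
  rw [hsqrt, div_mul_cancel₀ _ hx.ne']

theorem stmt_1 {X : Type*} [NormedAddCommGroup X] [NormedSpace ℝ X]
    (x y : X) (hx : ‖x‖ = 1) (hy : ‖y‖ = 1) (h1 : x ≠ y) (h2 : x ≠ -y) :
    ∃ ε ∈ Set.Ico (0 : ℝ) 1, DOrth ε x y :=
  stmt_1_general fun hmem =>
    (eq_or_eq_neg_of_mem_span_singleton_of_norm_eq hmem (hx.trans hy.symm)).elim h1 h2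
end

section
/- Let X be a finite-dimensional real Banach space (finite-dimensional real normed space). Then the Birkhoff-James orthogonality is D-approximately symmetric in X: there exists ε ∈ [0,1) such that for all x, y ∈ X, x ⊥_B y implies y ⊥_D^ε x. -/
open Set Metric

/-!
If `x ⊥_B y`, rescaling the orthogonality inequality by `t` gives `‖t • x‖ ≤ ‖y + t • x‖`.
Hence `‖y‖ ≤ ‖y + t • x‖ + ‖t • x‖ ≤ 2 * ‖y + t • x‖`, which is `y ⊥_D^ε x` as soon as
`√(1 - ε ^ 2) ≤ 1 / 2`.
-/

section NormedSpace

variable {E : Type*} [NormedAddCommGroup E] [NormedSpace ℝ E] {x y : E}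

theorem BJOrth.norm_smul_le_norm_add_smul (h : BJOrth x y) (t : ℝ) :
    ‖t • x‖ ≤ ‖y + t • x‖ := by
  rcases eq_or_ne t 0 with rfl | ht
  · simp
  · calc
      ‖t • x‖ = ‖t‖ * ‖x‖ := norm_smul t x
      _ ≤ ‖t‖ * ‖x + t⁻¹ • y‖ := by gcongr; exact h t⁻¹
      _ = ‖y + t • x‖ := by rw [← norm_smul, smul_add, smul_inv_smul₀ ht, add_comm]

theorem BJOrth.norm_le_two_mul_norm_add_smul (h : BJOrth x y) (t : ℝ) :
    ‖y‖ ≤ 2 * ‖y + t • x‖ :=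
  calc
    ‖y‖ ≤ ‖y + t • x‖ + ‖t • x‖ := norm_le_add_norm_add y (t • x)
    _ ≤ ‖y + t • x‖ + ‖y + t • x‖ := by gcongr; exact h.norm_smul_le_norm_add_smul t
    _ = 2 * ‖y + t • x‖ := (two_mul _).symm

theorem BJOrth.dOrth_symm (h : BJOrth x y) {ε : ℝ} (hε : 3 / 4 ≤ ε ^ 2) : DOrth ε y x := by
  intro t
  have sqrt_le_half : √(1 - ε ^ 2) ≤ 1 / 2 :=
    Real.sqrt_le_iff.mpr ⟨by norm_num, by linarith⟩
  calc
    √(1 - ε ^ 2) * ‖y‖ ≤ 1 / 2 * ‖y‖ := by gcongr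
    _ ≤ ‖y + t • x‖ := by linarith [h.norm_le_two_mul_norm_add_smul t]

end NormedSpace

theorem stmt_2_general {X : Type*} [NormedAddCommGroup X] [NormedSpace ℝ X] :
    ∃ ε ∈ Set.Ico (0 : ℝ) 1, ∀ x y : X, BJOrth x y → DOrth ε y x := by
  have sq_eq : (√3 / 2) ^ 2 = 3 / 4 := by norm_num [div_pow]
  have lt_one : √3 / 2 < 1 := by nlinarith only [sq_eq]
  exact ⟨√3 / 2, ⟨by positivity, lt_one⟩, fun _ _ h => h.dOrth_symm sq_eq.ge⟩

theorem stmt_2 {X : Type*} [NormedAddCommGroup X] [NormedSpace ℝ X]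
    [FiniteDimensional ℝ X] :
    ∃ ε ∈ Set.Ico (0 : ℝ) 1, ∀ x y : X, BJOrth x y → DOrth ε y x :=
  stmt_2_general
end

section
/- Let X be a reflexive real Banach space, Y a real normed linear space, and let T, A : X → Y be compact linear operators with ‖T‖ = ‖A‖ = 1. Suppose the set 𝒜 = {x ∈ S_X : Tx ≠ λ·Ax for all real λ} is nonempty and that A ⊥_B T (in the operator norm). Then, with α = sup_{x ∈ 𝒜} inf_{λ ∈ ℝ} ‖Tx + λ·Ax‖, one has 0 < α ≤ 1 and ‖T + λ·A‖ ≥ α for every real λ (i.e., T ⊥_D^ε A where √(1−ε²) = α). -/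
/-!
The infimum `⨅ t, ‖T x + t • A x‖` is the distance from `T x` to the line spanned by `A x`. This
line is finite-dimensional, hence closed, so the distance is positive when `T x` lies off it. On
the other hand, for unit `x` and each fixed `s`, the infimum is at most
`‖(T + s • A) x‖ ≤ ‖T + s • A‖`, a bound which does not depend on `x` and so passes to the
supremum.
-/

open Set Metric

section LineDistance

variable {𝕜 E : Type*}

lemma iInf_norm_add_smul_eq_infDist [NormedField 𝕜] [SeminormedAddCommGroup E] [NormedSpace 𝕜 E]
    (u v : E) : ⨅ t : 𝕜, ‖u + t • v‖ = infDist u (Submodule.span 𝕜 {v} : Set E) := by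
  calc ⨅ t : 𝕜, ‖u + t • v‖ = ⨅ t : 𝕜, dist u (t • v) := by
        rw [← (Equiv.neg 𝕜).iInf_comp]
        simp [dist_eq_norm, sub_eq_add_neg]
    _ = infDist u (Submodule.span 𝕜 {v} : Set E) := by
        rw [Submodule.span_singleton_eq_range, infDist_eq_iInf,
          iInf_range' (fun y => dist u y) fun t : 𝕜 => t • v]

lemma iInf_norm_add_smul_pos_iff [NontriviallyNormedField 𝕜] [CompleteSpace 𝕜]
    [NormedAddCommGroup E] [NormedSpace 𝕜 E] {u v : E} :
    0 < ⨅ t : 𝕜, ‖u + t • v‖ ↔ ∀ t : 𝕜, u ≠ t • v := by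
  have hclosed : IsClosed (Submodule.span 𝕜 {v} : Set E) :=
    Submodule.closed_of_finiteDimensional _
  rw [iInf_norm_add_smul_eq_infDist,
    ← hclosed.notMem_iff_infDist_pos (Submodule.nonempty _), SetLike.mem_coe,
    Submodule.mem_span_singleton, not_exists]
  exact forall_congr' fun t => ne_comm

end LineDistance

section OperatorPencil

variable {𝕜 X Y : Type*} [NontriviallyNormedField 𝕜] [SeminormedAddCommGroup X] [NormedSpace 𝕜 X]

lemma iInf_norm_apply_add_smul_le_opNorm [SeminormedAddCommGroup Y] [NormedSpace 𝕜 Y]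
    (T A : X →L[𝕜] Y) {x : X} (hx : ‖x‖ ≤ 1) (s : 𝕜) :
    ⨅ t : 𝕜, ‖T x + t • A x‖ ≤ ‖T + s • A‖ := by
  have hbdd : BddBelow (range fun t : 𝕜 => ‖T x + t • A x‖) :=
    ⟨0, forall_mem_range.2 fun _ => norm_nonneg _⟩
  calc ⨅ t : 𝕜, ‖T x + t • A x‖ ≤ ‖T x + s • A x‖ := ciInf_le hbdd s
    _ ≤ ‖T + s • A‖ := (T + s • A).unit_le_opNorm x hx

theorem stmt_3_general [CompleteSpace 𝕜] [NormedAddCommGroup Y] [NormedSpace 𝕜 Y]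
    (T A : X →L[𝕜] Y) (𝒜 : Set X) (h𝒜 : 𝒜 = {x : X | ‖x‖ = 1 ∧ ∀ l : 𝕜, T x ≠ l • A x})
    (hne : 𝒜.Nonempty) (α : ℝ) (hα : α = ⨆ x : 𝒜, ⨅ t : 𝕜, ‖T x + t • A x‖) :
    0 < α ∧ ∀ t : 𝕜, α ≤ ‖T + t • A‖ := by
  subst hα
  have := hne.to_subtype
  have hle (s : 𝕜) (x : 𝒜) : ⨅ t : 𝕜, ‖T x + t • A x‖ ≤ ‖T + s • A‖ :=
    iInf_norm_apply_add_smul_le_opNorm T A (h𝒜.subset x.2).1.le s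
  have hbdd : BddAbove (range fun x : 𝒜 => ⨅ t : 𝕜, ‖T x + t • A x‖) :=
    ⟨_, forall_mem_range.2 (hle 0)⟩
  refine ⟨?_, fun s => ciSup_le (hle s)⟩
  obtain ⟨x, hx⟩ := hne
  calc 0 < ⨅ t : 𝕜, ‖T x + t • A x‖ := iInf_norm_add_smul_pos_iff.2 (h𝒜.subset hx).2
    _ ≤ ⨆ x : 𝒜, ⨅ t : 𝕜, ‖T x + t • A x‖ := le_ciSup hbdd ⟨x, hx⟩

end OperatorPencil

theorem stmt_3 {X Y : Type*} [NormedAddCommGroup X] [NormedSpace ℝ X] [CompleteSpace X]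
    [NormedAddCommGroup Y] [NormedSpace ℝ Y]
    (hrefl : Function.Surjective (NormedSpace.inclusionInDoubleDual ℝ X))
    (T A : X →L[ℝ] Y) (hTcpt : IsCompactOperator T) (hAcpt : IsCompactOperator A)
    (hT : ‖T‖ = 1) (hA : ‖A‖ = 1)
    (𝒜 : Set X) (h𝒜 : 𝒜 = {x : X | ‖x‖ = 1 ∧ ∀ l : ℝ, T x ≠ l • A x})
    (hne : 𝒜.Nonempty) (horth : BJOrth A T)
    (α : ℝ) (hα : α = ⨆ x : 𝒜, ⨅ t : ℝ, ‖T x + t • A x‖) :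
    0 < α ∧ α ≤ 1 ∧ ∀ t : ℝ, α ≤ ‖T + t • A‖ := by
  obtain ⟨hpos, hle⟩ := stmt_3_general T A 𝒜 h𝒜 hne α hα
  exact ⟨hpos, by simpa [hT] using hle 0, hle⟩
end

section
/- Let X and Y be finite-dimensional real Banach spaces and let T, A : X → Y be linear operators with ‖T‖ = ‖A‖ = 1. Let 𝒜 = {x ∈ S_X : Tx ≠ λ·Ax for all real λ}. If A ⊥_B T (in the operator norm), then 𝒜 is nonempty and, with α = sup_{x ∈ 𝒜} inf_{λ ∈ ℝ} ‖Tx + λ·Ax‖, one has 0 < α ≤ 1 and ‖T + λ·A‖ ≥ α for every real λ (i.e., T ⊥_D^ε A where √(1−ε²) = α). -/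
/-!
If `T x ∈ 𝕜 ∙ A x` for every `x`, then `T ∈ 𝕜 ∙ A`: on the range of `A`, the map `A x ↦ T x` is an
endomorphism having every nonzero vector as an eigenvector, hence a homothety. So whenever `T` is
not a multiple of `A`, in particular when `T ≠ 0` and `A ⊥_B T`, some unit vector `x` has
`T x ∉ 𝕜 ∙ A x`. For such an `x`, the infimum of `‖T x + t • A x‖` over `t` is the distance from
`T x` to the closed line `𝕜 ∙ A x`, so it is positive, and it is at most `‖T + t • A‖` for each `t`.
-/

open Set Metric

theorem exists_eq_smul_of_forall_exists_apply_eq_smul {K V W : Type*} [Field K] [AddCommGroup V]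
    [Module K V] [AddCommGroup W] [Module K W] {T A : V →ₗ[K] W}
    (h : ∀ x, ∃ c : K, T x = c • A x) : ∃ c : K, T = c • A := by
  obtain ⟨g, hg⟩ := A.rangeRestrict.exists_rightInverse_of_surjective A.range_rangeRestrict
  have A_g (y : A.range) : A (g y) = y := congrArg Subtype.val (LinearMap.congr_fun hg y)
  have T_g (y : A.range) : ∃ c : K, T (g y) = c • (y : W) := by simpa only [A_g] using h (g y)
  have T_g_mem (y : A.range) : T (g y) ∈ A.range := by
    obtain ⟨c, hc⟩ := T_g y
    exact hc ▸ A.range.smul_mem c y.2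
  let S : A.range →ₗ[K] A.range := (T ∘ₗ g).codRestrict A.range T_g_mem
  obtain ⟨a, ha⟩ : ∃ a : K, S = a • LinearMap.id := by
    refine S.exists_eq_smul_id_of_forall_notLinearIndependent fun y hy ↦ ?_
    obtain ⟨c, hc⟩ := T_g y
    have hSy : c • y = S y := Subtype.ext hc.symm
    exact (LinearIndependent.pair_iff' (hy.ne_zero 0)).mp hy c hSy
  have T_eq_zero {x : V} (hx : A x = 0) : T x = 0 := by
    obtain ⟨c, hc⟩ := h x
    rw [hc, hx, smul_zero]
  refine ⟨a, LinearMap.ext fun x ↦ ?_⟩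
  have hx : T x = T (g (A.rangeRestrict x)) := by
    rw [← sub_eq_zero, ← map_sub]
    exact T_eq_zero (by rw [map_sub, A_g]; exact sub_self _)
  exact hx.trans (congrArg Subtype.val (LinearMap.congr_fun ha (A.rangeRestrict x)))

theorem exists_norm_eq_one_forall_apply_ne_smul {𝕜 X Y : Type*} [RCLike 𝕜] [NormedAddCommGroup X]
    [NormedSpace 𝕜 X] [AddCommGroup Y] [Module 𝕜 Y] {T A : X →ₗ[𝕜] Y}
    (hTA : ∀ c : 𝕜, T ≠ c • A) : ∃ x, ‖x‖ = 1 ∧ ∀ c : 𝕜, T x ≠ c • A x := by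
  obtain ⟨x, hx⟩ : ∃ x, ∀ c : 𝕜, T x ≠ c • A x := by
    by_contra! h
    obtain ⟨c, hc⟩ := exists_eq_smul_of_forall_exists_apply_eq_smul h
    exact hTA c hc
  have hx₀ : x ≠ 0 := by
    rintro rfl
    exact hx 0 (by rw [map_zero, zero_smul])
  refine ⟨(‖x‖⁻¹ : 𝕜) • x, norm_smul_inv_norm hx₀, fun c hc ↦ hx c ?_⟩
  have hscale : (‖x‖⁻¹ : 𝕜) ≠ 0 := inv_ne_zero (mod_cast norm_ne_zero_iff.mpr hx₀)
  rw [map_smul, map_smul, smul_comm c] at hc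
  exact smul_right_injective Y hscale hc

section Normed

variable {𝕜 X Y : Type*} [NontriviallyNormedField 𝕜]

theorem infDist_span_singleton_eq_iInf [SeminormedAddCommGroup Y] [NormedSpace 𝕜 Y] (u v : Y) :
    infDist u (𝕜 ∙ v : Submodule 𝕜 Y) = ⨅ t : 𝕜, ‖u + t • v‖ := by
  rw [infDist_eq_iInf, LinearMap.span_singleton_eq_range, LinearMap.coe_range,
    iInf_range' (dist u), ← (Equiv.neg 𝕜).iInf_comp]
  simp only [Equiv.neg_apply, LinearMap.toSpanSingleton_apply, dist_eq_norm, neg_smul,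
    sub_neg_eq_add]

theorem iInf_norm_add_smul_pos [CompleteSpace 𝕜] [NormedAddCommGroup Y] [NormedSpace 𝕜 Y] {u v : Y}
    (h : ∀ c : 𝕜, u ≠ c • v) : 0 < ⨅ t : 𝕜, ‖u + t • v‖ := by
  have hu : u ∉ 𝕜 ∙ v := fun hmem ↦
    have ⟨c, hc⟩ := Submodule.mem_span_singleton.mp hmem
    h c hc.symm
  rw [← infDist_span_singleton_eq_iInf]
  exact ((𝕜 ∙ v).closed_of_finiteDimensional.notMem_iff_infDist_pos (𝕜 ∙ v).nonempty).mp hu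

theorem iInf_norm_apply_add_smul_le [SeminormedAddCommGroup X] [NormedSpace 𝕜 X]
    [SeminormedAddCommGroup Y] [NormedSpace 𝕜 Y] (T A : X →L[𝕜] Y) {x : X} (hx : ‖x‖ ≤ 1) (t : 𝕜) :
    ⨅ s : 𝕜, ‖T x + s • A x‖ ≤ ‖T + t • A‖ :=
  (ciInf_le ⟨0, forall_mem_range.mpr fun _ ↦ norm_nonneg _⟩ t).trans
    ((T + t • A).unit_le_opNorm x hx)

end Normed

theorem BJOrth.ne_smul {E : Type*} [NormedAddCommGroup E] [NormedSpace ℝ E] {x y : E}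
    (h : BJOrth x y) (hy : y ≠ 0) (c : ℝ) : y ≠ c • x := by
  rintro rfl
  obtain ⟨hc, hx⟩ := smul_ne_zero_iff.mp hy
  have hnorm : ‖x‖ ≤ 0 := by simpa [hc] using h (-c⁻¹)
  exact hx (norm_le_zero_iff.mp hnorm)

theorem stmt_4_general {𝕜 X Y : Type*} [RCLike 𝕜] [NormedAddCommGroup X] [NormedSpace 𝕜 X]
    [NormedAddCommGroup Y] [NormedSpace 𝕜 Y] (T A : X →L[𝕜] Y) (hTA : ∀ c : 𝕜, T ≠ c • A)
    (𝒜 : Set X) (h𝒜 : 𝒜 = {x : X | ‖x‖ = 1 ∧ ∀ c : 𝕜, T x ≠ c • A x})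
    (α : ℝ) (hα : α = ⨆ x : 𝒜, ⨅ t : 𝕜, ‖T x + t • A x‖) :
    𝒜.Nonempty ∧ 0 < α ∧ ∀ t : 𝕜, α ≤ ‖T + t • A‖ := by
  obtain ⟨x, hx⟩ := exists_norm_eq_one_forall_apply_ne_smul (T := (T : X →ₗ[𝕜] Y)) (A := A)
    fun c hc ↦ hTA c (ContinuousLinearMap.coe_injective hc)
  have hx𝒜 : x ∈ 𝒜 := h𝒜.superset hx
  have hle (t : 𝕜) (y : 𝒜) : ⨅ s : 𝕜, ‖T y + s • A y‖ ≤ ‖T + t • A‖ :=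
    iInf_norm_apply_add_smul_le T A (h𝒜.subset y.2).1.le t
  have hbdd : BddAbove (range fun y : 𝒜 ↦ ⨅ s : 𝕜, ‖T y + s • A y‖) :=
    ⟨_, forall_mem_range.mpr (hle 0)⟩
  rw [hα]
  exact ⟨⟨x, hx𝒜⟩, (iInf_norm_add_smul_pos hx.2).trans_le (le_ciSup hbdd ⟨x, hx𝒜⟩),
    fun t ↦ Real.iSup_le (hle t) (norm_nonneg _)⟩

theorem stmt_4 {X Y : Type*} [NormedAddCommGroup X] [NormedSpace ℝ X]
    [FiniteDimensional ℝ X]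
    [NormedAddCommGroup Y] [NormedSpace ℝ Y] [FiniteDimensional ℝ Y]
    (T A : X →L[ℝ] Y) (hT : ‖T‖ = 1) (hA : ‖A‖ = 1)
    (𝒜 : Set X) (h𝒜 : 𝒜 = {x : X | ‖x‖ = 1 ∧ ∀ l : ℝ, T x ≠ l • A x})
    (horth : BJOrth A T)
    (α : ℝ) (hα : α = ⨆ x : 𝒜, ⨅ t : ℝ, ‖T x + t • A x‖) :
    𝒜.Nonempty ∧ 0 < α ∧ α ≤ 1 ∧ ∀ t : ℝ, α ≤ ‖T + t • A‖ := by
  have hT₀ : T ≠ 0 := norm_ne_zero_iff.mp (hT ▸ one_ne_zero)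
  obtain ⟨hne, hpos, hle⟩ := stmt_4_general T A (horth.ne_smul hT₀) 𝒜 h𝒜 α hα
  exact ⟨hne, hpos, by simpa [hT] using hle 0, hle⟩
end

section
/- Let n ≥ 2 and let X = ℝⁿ equipped with the supremum norm ‖·‖_∞. Let x ∈ S_X be a smooth point (i.e., J(x) is a singleton; equivalently, exactly one coordinate of x has absolute value 1). Then x is C-approximately left-symmetric (there exists ε ∈ [0,1) such that for every y ∈ X, x ⊥_B y implies y ⊥_B^ε x), but x is not C-approximately right-symmetric (for every ε ∈ [0,1) there exists y ∈ X with y ⊥_B x and not x ⊥_B^ε y). -/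
/-!
Singling out the peak coordinate splits the space isometrically as a sup-norm product `E × F` with
`E = ℝ`, in which `x = (a, z)` and `‖z‖ < ‖a‖`.

* Left symmetry: near `x` the norm can only be decreased through the first coordinate, and by
  convexity `x ⊥_B y` is decided near `x`, so it forces `a ⊥_B y.1`. If `y` attains its norm in
  `E`, the left symmetry of `a` applies. If it does so in `F`, moving to `y + t • x` costs at most
  `|t| * ‖z‖ = (‖z‖ / ‖a‖) * ‖t • x‖`.
* Failure of right symmetry: let `y = (a, w)`, where `w` has norm `‖a‖` and points away from `z`.
  The first coordinate shows `‖y‖ ≤ ‖y + t • x‖` for `0 ≤ t`, and the second for `t ≤ 0`, so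
  `y ⊥_B x`. But `‖x - s • y‖ = ‖x‖ - s * ‖y‖` for small `s > 0`, the fastest possible decrease.
-/

open Set Metric

open Filter Topology

section NormedSpace

variable {E F : Type*} [NormedAddCommGroup E] [NormedSpace ℝ E]
  [NormedAddCommGroup F] [NormedSpace ℝ F]

lemma bjOrth_of_eventually {x y : E} (h : ∀ᶠ t : ℝ in 𝓝 0, ‖x‖ ≤ ‖x + t • y‖) : BJOrth x y := by
  have convex : ConvexOn ℝ univ fun t : ℝ => ‖x + t • y‖ := by
    simpa [Function.comp_def, AffineMap.lineMap_apply, add_comm] using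
      (convexOn_univ_norm (E := E)).comp_affineMap (AffineMap.lineMap x (x + y))
  have localMin : IsLocalMin (fun t : ℝ => ‖x + t • y‖) 0 := by
    simpa [IsLocalMin, IsMinFilter] using h
  simpa [BJOrth] using IsMinOn.of_isLocalMin_of_convex_univ localMin convex

lemma bjOrth_iff_inner_eq_zero {H : Type*} [NormedAddCommGroup H] [InnerProductSpace ℝ H]
    {x y : H} : BJOrth x y ↔ inner ℝ x y = 0 := by
  have expand (t : ℝ) :
      ‖x + t • y‖ ^ 2 = ‖y‖ ^ 2 * (t * t) + 2 * inner ℝ x y * t + ‖x‖ ^ 2 := by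
    rw [norm_add_sq_real, inner_smul_right, norm_smul, mul_pow, Real.norm_eq_abs, sq_abs]
    ring
  have norm_le_iff (t : ℝ) :
      ‖x‖ ≤ ‖x + t • y‖ ↔ 0 ≤ ‖y‖ ^ 2 * (t * t) + 2 * inner ℝ x y * t + 0 := by
    rw [← sq_le_sq₀ (norm_nonneg _) (norm_nonneg _), expand, le_add_iff_nonneg_left, add_zero]
  simp only [BJOrth, norm_le_iff]
  constructor
  · intro h
    have := discrim_le_zero h
    rw [discrim] at this
    nlinarith
  · intro h t
    rw [h]
    nlinarith [mul_nonneg (sq_nonneg ‖y‖) (mul_self_nonneg t)]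

lemma BJOrth.bOrth_zero {x y : E} (h : BJOrth x y) : BOrth 0 x y := fun t => by
  simpa using pow_le_pow_left₀ (norm_nonneg x) (h t) 2

lemma bOrth_one (x y : E) : BOrth 1 x y := fun t => by
  have lower : ‖x‖ - ‖t • y‖ ≤ ‖x + t • y‖ := by
    simpa using norm_sub_norm_le x (-(t • y))
  have upper : ‖t • y‖ - ‖x‖ ≤ ‖x + t • y‖ := by
    simpa [add_comm] using norm_sub_norm_le (t • y) (-x)
  have : (‖x‖ - ‖t • y‖) ^ 2 ≤ ‖x + t • y‖ ^ 2 := sq_le_sq' (by linarith) lower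
  nlinarith [sq_nonneg ‖t • y‖]

lemma BOrth.mono {ε δ : ℝ} (hεδ : ε ≤ δ) {x y : E} (h : BOrth ε x y) : BOrth δ x y :=
  fun t => le_trans (by gcongr) (h t)

lemma not_bOrth_of_eventually {ε : ℝ} (hε : ε < 1) {x y : E} (hx : x ≠ 0) (hy : y ≠ 0)
    (h : ∀ᶠ s : ℝ in 𝓝[>] 0, ‖x - s • y‖ ≤ ‖x‖ - s * ‖y‖) : ¬ BOrth ε x y := by
  intro hxy
  have small : ∀ᶠ s : ℝ in 𝓝[>] 0, s * ‖y‖ < 2 * (1 - ε) * ‖x‖ := by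
    have pos : 0 * ‖y‖ < 2 * (1 - ε) * ‖x‖ := by
      rw [zero_mul]
      exact mul_pos (by linarith) (norm_pos_iff.mpr hx)
    have cont : Continuous fun s : ℝ => s * ‖y‖ := by fun_prop
    exact nhdsWithin_le_nhds (cont.continuousAt.eventually_lt_const pos)
  obtain ⟨s, decrease, s_small, s_pos : 0 < s⟩ := (h.and (small.and self_mem_nhdsWithin)).exists
  have sy_pos : 0 < s * ‖y‖ := mul_pos s_pos (norm_pos_iff.mpr hy)
  have lower : ‖x‖ ^ 2 - 2 * ε * ‖x‖ * (s * ‖y‖) ≤ ‖x - s • y‖ ^ 2 := by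
    simpa [norm_smul, abs_of_pos s_pos, ← sub_eq_add_neg] using hxy (-s)
  have upper : ‖x - s • y‖ ^ 2 ≤ (‖x‖ - s * ‖y‖) ^ 2 :=
    pow_le_pow_left₀ (norm_nonneg _) decrease 2
  nlinarith [mul_pos sy_pos (sub_pos.mpr s_small)]

lemma bjOrth_map_iff (f : E →ₗᵢ[ℝ] F) {x y : E} :
    BJOrth (f x) (f y) ↔ BJOrth x y := by
  simp only [BJOrth, ← map_smul, ← map_add, f.norm_map]

lemma bOrth_map_iff (f : E →ₗᵢ[ℝ] F) {ε : ℝ} {x y : E} :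
    BOrth ε (f x) (f y) ↔ BOrth ε x y := by
  simp only [BOrth, ← map_smul, ← map_add, f.norm_map]

lemma exists_norm_eq_and_norm_le_add_smul [Nontrivial F] (z : F) {r : ℝ} (hr : 0 ≤ r) :
    ∃ w : F, ‖w‖ = r ∧ ∀ t ≤ (0 : ℝ), ‖w‖ ≤ ‖w + t • z‖ := by
  obtain ⟨v, hv, hvz⟩ : ∃ v : F, ‖v‖ = 1 ∧ ‖z‖ • v = z := by
    rcases eq_or_ne z 0 with rfl | hz
    · simpa using exists_norm_eq F zero_le_one
    · exact ⟨‖z‖⁻¹ • z, norm_smul_inv_norm hz, smul_inv_smul₀ (norm_ne_zero_iff.mpr hz) z⟩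
  have norm_smul_v (c : ℝ) : ‖c • v‖ = |c| := by simp [norm_smul, hv]
  refine ⟨(-r) • v, by simp [norm_smul_v, abs_of_nonneg hr], fun t ht => ?_⟩
  have tz_nonpos : t * ‖z‖ ≤ 0 := mul_nonpos_of_nonpos_of_nonneg ht (norm_nonneg z)
  have combine : (-r) • v + t • z = (-r + t * ‖z‖) • v := by rw [add_smul, mul_smul, hvz]
  rw [combine, norm_smul_v, norm_smul_v, abs_of_nonpos (by linarith), abs_of_nonpos (by linarith)]
  linarith

/-- `x` is C-approximately left-symmetric: for some `ε < 1`, every `y` with `x ⊥_B y` satisfies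
`y ⊥_B^ε x`. -/
def IsApproxLeftSymm (x : E) : Prop :=
  ∃ ε ∈ Ico (0 : ℝ) 1, ∀ y : E, BJOrth x y → BOrth ε y x

/-- `x` is C-approximately right-symmetric: for some `ε < 1`, every `y` with `y ⊥_B x` satisfies
`x ⊥_B^ε y`. -/
def IsApproxRightSymm (x : E) : Prop :=
  ∃ ε ∈ Ico (0 : ℝ) 1, ∀ y : E, BJOrth y x → BOrth ε x y

lemma isApproxLeftSymm_of_innerProductSpace {H : Type*} [NormedAddCommGroup H]
    [InnerProductSpace ℝ H] (x : H) : IsApproxLeftSymm x := by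
  refine ⟨0, by simp, fun y hxy => BJOrth.bOrth_zero ?_⟩
  rwa [bjOrth_iff_inner_eq_zero, real_inner_comm, ← bjOrth_iff_inner_eq_zero]

lemma IsApproxLeftSymm.of_map (f : E →ₗᵢ[ℝ] F) {x : E} (h : IsApproxLeftSymm (f x)) :
    IsApproxLeftSymm x := by
  obtain ⟨ε, hε, hsymm⟩ := h
  exact ⟨ε, hε, fun y hxy => (bOrth_map_iff f).mp (hsymm (f y) ((bjOrth_map_iff f).mpr hxy))⟩

lemma IsApproxRightSymm.of_map (f : E →ₗᵢ[ℝ] F) {x : E} (h : IsApproxRightSymm (f x)) :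
    IsApproxRightSymm x := by
  obtain ⟨ε, hε, hsymm⟩ := h
  exact ⟨ε, hε, fun y hyx => (bOrth_map_iff f).mp (hsymm (f y) ((bjOrth_map_iff f).mpr hyx))⟩

lemma BJOrth.fst {x y : E × F} (hx : ‖x.2‖ < ‖x.1‖) (h : BJOrth x y) : BJOrth x.1 y.1 := by
  have snd_small : ∀ᶠ t : ℝ in 𝓝 0, ‖x.2 + t • y.2‖ < ‖x.1‖ := by
    have cont : Continuous fun t : ℝ => ‖x.2 + t • y.2‖ := by fun_prop
    exact cont.continuousAt.eventually_lt_const (by simpa using hx)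
  refine bjOrth_of_eventually (snd_small.mono fun t ht => ?_)
  have fst_le : ‖x.1‖ ≤ max ‖x.1 + t • y.1‖ ‖x.2 + t • y.2‖ := (norm_fst_le x).trans (h t)
  exact (le_max_iff.mp fst_le).resolve_right ht.not_ge

lemma BOrth.of_fst {ε : ℝ} (hε : 0 ≤ ε) {x y : E × F} (hx : ‖x.2‖ ≤ ε * ‖x.1‖)
    (h : BOrth ε y.1 x.1) : BOrth ε y x := by
  intro t
  rcases max_choice ‖y.1‖ ‖y.2‖ with hy | hy <;> rw [← Prod.norm_def] at hy
  · calc ‖y‖ ^ 2 - 2 * ε * ‖y‖ * ‖t • x‖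
        ≤ ‖y.1‖ ^ 2 - 2 * ε * ‖y.1‖ * ‖t • x.1‖ := by
          rw [hy]
          gcongr
          exact norm_fst_le (t • x)
      _ ≤ ‖y.1 + t • x.1‖ ^ 2 := h t
      _ ≤ ‖y + t • x‖ ^ 2 := by
          gcongr
          exact norm_fst_le (y + t • x)
  · have snd_le : ‖t • x.2‖ ≤ ε * ‖t • x‖ := by
      rw [norm_smul, norm_smul, mul_left_comm]
      gcongr
      exact hx.trans (by gcongr; exact norm_fst_le x)
    calc ‖y‖ ^ 2 - 2 * ε * ‖y‖ * ‖t • x‖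
        = ‖y.2‖ ^ 2 - 2 * ‖y.2‖ * (ε * ‖t • x‖) := by rw [hy]; ring
      _ ≤ ‖y.2‖ ^ 2 - 2 * 1 * ‖y.2‖ * ‖t • x.2‖ := by rw [mul_one]; gcongr
      _ ≤ ‖y.2 + t • x.2‖ ^ 2 := bOrth_one y.2 x.2 t
      _ ≤ ‖y + t • x‖ ^ 2 := by
          gcongr
          exact norm_snd_le (y + t • x)

lemma IsApproxLeftSymm.of_fst {x : E × F} (hx : ‖x.2‖ < ‖x.1‖) (h : IsApproxLeftSymm x.1) :
    IsApproxLeftSymm x := by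
  obtain ⟨ε, ⟨ε_nonneg, ε_lt_one⟩, hsymm⟩ := h
  have fst_pos : 0 < ‖x.1‖ := (norm_nonneg _).trans_lt hx
  have max_nonneg : 0 ≤ max ε (‖x.2‖ / ‖x.1‖) := le_max_of_le_left ε_nonneg
  refine ⟨max ε (‖x.2‖ / ‖x.1‖), ⟨max_nonneg, max_lt ε_lt_one ((div_lt_one fst_pos).mpr hx)⟩,
    fun y hxy => BOrth.of_fst max_nonneg ?_ ((hsymm y.1 (hxy.fst hx)).mono (le_max_left _ _))⟩
  exact (div_le_iff₀ fst_pos).mp (le_max_right _ _)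

lemma exists_bjOrth_and_eventually_norm_sub_smul_le [Nontrivial F] {x : E × F}
    (hx : ‖x.2‖ < ‖x.1‖) : ∃ y : E × F, y ≠ 0 ∧ BJOrth y x ∧
      ∀ᶠ s : ℝ in 𝓝[>] 0, ‖x - s • y‖ ≤ ‖x‖ - s * ‖y‖ := by
  obtain ⟨w, norm_w, hw⟩ := exists_norm_eq_and_norm_le_add_smul x.2 (norm_nonneg x.1)
  have norm_y : ‖(x.1, w)‖ = ‖x.1‖ := by simp [Prod.norm_def, norm_w]
  have fst_pos : 0 < ‖x.1‖ := (norm_nonneg _).trans_lt hx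
  have norm_fst_smul {c : ℝ} (hc : 0 ≤ c) : ‖c • x.1‖ = c * ‖x.1‖ := norm_smul_of_nonneg hc x.1
  refine ⟨(x.1, w), norm_pos_iff.mp (norm_y ▸ fst_pos), fun t => ?_, ?_⟩
  · rw [norm_y]
    rcases le_total 0 t with ht | ht
    · calc ‖x.1‖ ≤ (1 + t) * ‖x.1‖ := le_mul_of_one_le_left fst_pos.le (by linarith)
        _ = ‖x.1 + t • x.1‖ := by rw [← norm_fst_smul (by linarith), add_smul, one_smul]
        _ ≤ ‖(x.1, w) + t • x‖ := norm_fst_le ((x.1, w) + t • x)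
    · calc ‖x.1‖ = ‖w‖ := norm_w.symm
        _ ≤ ‖w + t • x.2‖ := hw t ht
        _ ≤ ‖(x.1, w) + t • x‖ := norm_snd_le ((x.1, w) + t • x)
  · have snd_small : ∀ᶠ s : ℝ in 𝓝[>] 0, ‖x.2 - s • w‖ < ‖x.1‖ - s * ‖x.1‖ := by
      have cont : Continuous fun s : ℝ => ‖x.2 - s • w‖ := by fun_prop
      have cont' : Continuous fun s : ℝ => ‖x.1‖ - s * ‖x.1‖ := by fun_prop
      exact nhdsWithin_le_nhds
        (cont.continuousAt.eventually_lt cont'.continuousAt (by simpa using hx))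
    filter_upwards [snd_small, Ioo_mem_nhdsGT one_pos] with s hs ⟨_, s_lt_one⟩
    have fst_eq : ‖x.1 - s • x.1‖ = ‖x.1‖ - s * ‖x.1‖ := by
      rw [← one_sub_mul, ← norm_fst_smul (by linarith), sub_smul, one_smul]
    calc ‖x - s • (x.1, w)‖ ≤ ‖x.1‖ - s * ‖x.1‖ := max_le fst_eq.le hs.le
      _ ≤ ‖x‖ - s * ‖(x.1, w)‖ := by rw [norm_y]; gcongr; exact norm_fst_le x

lemma not_isApproxRightSymm_of_norm_snd_lt [Nontrivial F] {x : E × F} (hx : ‖x.2‖ < ‖x.1‖) :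
    ¬ IsApproxRightSymm x := by
  rintro ⟨ε, ⟨-, ε_lt_one⟩, hsymm⟩
  obtain ⟨y, y_ne_zero, hyx, decrease⟩ := exists_bjOrth_and_eventually_norm_sub_smul_le hx
  have x_ne_zero : x ≠ 0 := by
    rintro rfl
    simp at hx
  exact not_bOrth_of_eventually ε_lt_one x_ne_zero y_ne_zero decrease (hsymm y hyx)

end NormedSpace

section Pi

variable {ι : Type*} [Fintype ι] (E : ι → Type*) [∀ i, NormedAddCommGroup (E i)]
  [∀ i, NormedSpace ℝ (E i)]

/-- The splitting of a finite sup-norm product into its `i`-th factor and the sup-norm product of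
the others, as a linear isometry. -/
def piSplitAtₗᵢ [DecidableEq ι] (i : ι) :
    (∀ j, E j) ≃ₗᵢ[ℝ] E i × ∀ j : { j // j ≠ i }, E j where
  __ := Equiv.piSplitAt i E
  map_add' _ _ := rfl
  map_smul' _ _ := rfl
  norm_map' x := by
    refine le_antisymm (max_le (norm_le_pi_norm x i) ?_) ?_
    · exact (pi_norm_le_iff_of_nonneg (norm_nonneg x)).mpr fun j => norm_le_pi_norm x j
    · refine (pi_norm_le_iff_of_nonneg (norm_nonneg _)).mpr fun j => ?_
      by_cases hj : j = i
      · subst hj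
        exact le_max_left _ _
      · exact le_max_of_le_right
          (norm_le_pi_norm (fun k : { k // k ≠ i } => x k) ⟨j, hj⟩)

variable {E}

lemma norm_snd_piSplitAtₗᵢ_lt [DecidableEq ι] [Nontrivial ι] {x : ∀ i, E i} {i : ι}
    (hi : ‖x i‖ = ‖x‖) (unique : ∀ j, ‖x j‖ = ‖x‖ → j = i) :
    ‖(piSplitAtₗᵢ E i x).2‖ < ‖(piSplitAtₗᵢ E i x).1‖ := by
  have lt_peak (j : ι) (hj : j ≠ i) : ‖x j‖ < ‖x i‖ :=
    hi ▸ (norm_le_pi_norm x j).lt_of_ne fun h => hj (unique j h)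
  obtain ⟨j, hj⟩ := exists_ne i
  exact (pi_norm_lt_iff ((norm_nonneg _).trans_lt (lt_peak j hj))).mpr fun k => lt_peak k k.2

theorem stmt_6_general [Nontrivial ι] [∀ i, Nontrivial (E i)] (x : ∀ i, E i)
    (hsm : ∃! i, ‖x i‖ = ‖x‖) (hsymm : ∀ i, ‖x i‖ = ‖x‖ → IsApproxLeftSymm (x i)) :
    IsApproxLeftSymm x ∧ ¬ IsApproxRightSymm x := by
  classical
  obtain ⟨i, hi, unique⟩ := hsm
  have hx := norm_snd_piSplitAtₗᵢ_lt hi unique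
  let e : (∀ j, E j) ≃ₗᵢ[ℝ] E i × ∀ j : { j // j ≠ i }, E j := piSplitAtₗᵢ E i
  obtain ⟨j, hj⟩ := exists_ne i
  have : Nontrivial (∀ j : { j // j ≠ i }, E j) := Pi.nontrivial_at ⟨j, hj⟩
  refine ⟨((hsymm i hi).of_fst (x := e x) hx).of_map e.toLinearIsometry, fun h => ?_⟩
  refine not_isApproxRightSymm_of_norm_snd_lt hx (.of_map e.symm.toLinearIsometry ?_)
  simpa [e] using h

end Pi

theorem stmt_6 (n : ℕ) (hn : 2 ≤ n)
    (x : Fin n → ℝ) (hx : ‖x‖ = 1) (hsm : ∃! i : Fin n, |x i| = 1) :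
    (∃ ε ∈ Set.Ico (0 : ℝ) 1, ∀ y : Fin n → ℝ, BJOrth x y → BOrth ε y x) ∧
    (∀ ε ∈ Set.Ico (0 : ℝ) 1, ∃ y : Fin n → ℝ, BJOrth y x ∧ ¬ BOrth ε x y) := by
  have : Nontrivial (Fin n) := Fin.nontrivial_iff_two_le.mpr hn
  simpa [IsApproxLeftSymm, IsApproxRightSymm, hx] using stmt_6_general x
    (by simpa [hx] using hsm) fun i _ => isApproxLeftSymm_of_innerProductSpace (x i)
end

section
/- Let n ≥ 2 and let X = ℝⁿ equipped with the supremum norm ‖·‖_∞. Let x be an extreme point of the closed unit ball of X (i.e., every coordinate of x has absolute value 1). Then x is right-symmetric: for every y ∈ X, y ⊥_B x implies x ⊥_B y (in particular x is C-approximately right-symmetric). However, x is not C-approximately left-symmetric: for every ε ∈ [0,1) there exists y ∈ X with x ⊥_B y and not y ⊥_B^ε x. -/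
open Set Metric

/-!
The unit ball of `ℝⁿ` is the order interval `[-x, x]` for the cone `{z | 0 ≤ x i * z i for all i}`,
and the argument works for any order unit `x` whose order interval is the unit ball.

If `‖x + t • y‖ = 1 - δ` with `0 < δ`, then `t • y ≤ -δ • x`, so adding `δ • x` to `t • y` lowers
its norm by `δ` and `y` is not orthogonal to `x`; this is right symmetry.

Left symmetry is violated by any positive unit vector `v` on the boundary of the cone: `x + t • v`
lies in no interval `[-r • x, r • x]` with `r < 1`, while `v - s • x` has norm at most `1 - s` for
`0 ≤ s ≤ 1 / 2`, a first-order decrease at the maximal rate. For `z` outside the line through `x`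
and `w = ‖z‖ • x + z`, normalizing `‖w‖ • x - w` gives such a `v`.
-/

section OrderUnit

variable {E : Type*} [NormedAddCommGroup E] [NormedSpace ℝ E]

/-- `x` is an order unit for the cone `C`, and the norm of `E` is the corresponding order-unit norm:
in the order given by `C`, `‖z‖ ≤ r` means `-r • x ≤ z ≤ r • x`. As `r` may be negative, this forces
`-x ∉ C`, so that `x ≠ 0`. -/
def IsNormingOrderUnit (C : ConvexCone ℝ E) (x : E) : Prop :=
  ∀ (z : E) (r : ℝ), ‖z‖ ≤ r ↔ r • x - z ∈ C ∧ r • x + z ∈ C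

theorem BJOrth.smul_left {x y : E} (h : BJOrth y x) (t : ℝ) : BJOrth (t • y) x := by
  intro s
  obtain rfl | ht := eq_or_ne t 0
  · simp
  · have hfactor : t • y + s • x = t • (y + (s / t) • x) := by
      rw [smul_add, smul_smul, mul_div_cancel₀ _ ht]
    rw [hfactor, norm_smul, norm_smul]
    exact mul_le_mul_of_nonneg_left (h _) (norm_nonneg t)

namespace IsNormingOrderUnit

variable {C : ConvexCone ℝ E} {x : E}

theorem smul_mem_iff (hx : IsNormingOrderUnit C x) {r : ℝ} : r • x ∈ C ↔ 0 ≤ r := by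
  simpa using (hx 0 r).symm

theorem norm_eq_one (hx : IsNormingOrderUnit C x) : ‖x‖ = 1 := by
  apply le_antisymm
  · refine (hx x 1).2 ⟨?_, ?_⟩
    · simpa using hx.smul_mem_iff.2 le_rfl
    · simpa [two_smul] using hx.smul_mem_iff.2 (zero_le_two (α := ℝ))
  · have hmem : (‖x‖ - 1) • x ∈ C := by
      simpa [sub_smul] using ((hx x ‖x‖).1 le_rfl).1
    exact sub_nonneg.1 (hx.smul_mem_iff.1 hmem)

theorem norm_le_iff_of_mem (hx : IsNormingOrderUnit C x) {w : E} (hw : w ∈ C) {r : ℝ} :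
    ‖w‖ ≤ r ↔ r • x - w ∈ C := by
  rw [hx w r, and_iff_left_of_imp]
  intro hsub
  have hr : r • x ∈ C := by simpa using C.add_mem hsub hw
  exact C.add_mem hr hw

theorem bjOrth_of_bjOrth (hx : IsNormingOrderUnit C x) {y : E} (h : BJOrth y x) :
    BJOrth x y := by
  intro t
  rw [hx.norm_eq_one]
  by_contra! hlt
  set δ := 1 - ‖x + t • y‖ with hδ
  have hδ_le : δ ≤ ‖t • y‖ := by
    have := norm_le_add_norm_add x (t • y)
    rw [hx.norm_eq_one] at this
    linarith
  have hneg : -(δ • x + t • y) ∈ C := by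
    convert ((hx (x + t • y) _).1 le_rfl).1 using 1
    rw [hδ]
    module
  have hshift : ‖t • y + δ • x‖ ≤ ‖t • y‖ - δ := by
    refine (hx _ _).2 ⟨?_, ?_⟩
    · convert C.add_mem (hx.smul_mem_iff.2 (sub_nonneg.2 hδ_le)) hneg using 1
      module
    · convert ((hx (t • y) _).1 le_rfl).2 using 1
      module
  linarith [h.smul_left t δ]

theorem bjOrth_of_boundary (hx : IsNormingOrderUnit C x) {v : E} (hv : v ∈ C)
    (hboundary : ∀ δ : ℝ, 0 < δ → v - δ • x ∉ C) : BJOrth x v := by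
  intro t
  rw [hx.norm_eq_one]
  by_contra! hlt
  set δ := 1 - ‖x + t • v‖ with hδ
  have hδ_pos : 0 < δ := sub_pos.2 hlt
  have hneg : -(δ • x + t • v) ∈ C := by
    convert ((hx (x + t • v) _).1 le_rfl).1 using 1
    rw [hδ]
    module
  have ht : t < 0 := by
    by_contra! ht
    have htv : t • v ∈ C := by
      obtain rfl | ht := ht.eq_or_lt
      · simpa using hx.smul_mem_iff.2 le_rfl
      · exact C.smul_mem ht hv
    have hsum : (-δ) • x ∈ C := by
      convert C.add_mem htv hneg using 1
      module
    linarith [hx.smul_mem_iff.1 hsum]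
  have hs : 0 < -t⁻¹ := neg_pos.2 (inv_lt_zero.2 ht)
  apply hboundary (-t⁻¹ * δ) (mul_pos hs hδ_pos)
  convert C.smul_mem hs hneg using 1
  rw [smul_neg, neg_smul, neg_neg, smul_add, inv_smul_smul₀ ht.ne]
  module

theorem norm_sub_smul_le (hx : IsNormingOrderUnit C x) {v : E} (hv : v ∈ C) (hv_norm : ‖v‖ ≤ 1)
    {s : ℝ} (hs : s ≤ 1 / 2) : ‖v - s • x‖ ≤ 1 - s := by
  refine (hx _ _).2 ⟨?_, ?_⟩
  · convert ((hx v 1).1 hv_norm).1 using 1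
    module
  · have hs' : 0 ≤ 1 - 2 * s := by linarith
    convert C.add_mem (hx.smul_mem_iff.2 hs') hv using 1
    module

theorem not_bOrth (hx : IsNormingOrderUnit C x) {v : E} (hv : v ∈ C) (hv_norm : ‖v‖ = 1)
    {ε : ℝ} (hε : ε ∈ Ico 0 1) : ¬ BOrth ε v x := by
  intro h
  obtain ⟨hε_nonneg, hε_lt⟩ := hε
  set s := (1 - ε) / 2 with hs
  have hs_pos : 0 < s := by linarith
  have hupper : ‖v - s • x‖ ^ 2 ≤ (1 - s) ^ 2 :=
    pow_le_pow_left₀ (norm_nonneg _) (hx.norm_sub_smul_le hv hv_norm.le (by linarith)) 2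
  have hlower : 1 - 2 * ε * s ≤ ‖v - s • x‖ ^ 2 := by
    simpa [hv_norm, norm_smul, hx.norm_eq_one, abs_of_pos hs_pos, ← sub_eq_add_neg] using h (-s)
  have hgap : (1 - s) ^ 2 < 1 - 2 * ε * s := by
    have hdiff : 1 - 2 * ε * s - (1 - s) ^ 2 = 3 * s ^ 2 := by
      rw [hs]
      ring
    linarith [pow_pos hs_pos 2]
  exact (hupper.trans_lt hgap).not_ge hlower

theorem exists_boundary_norm_eq_one (hx : IsNormingOrderUnit C x) (hE : 1 < Module.rank ℝ E) :
    ∃ v ∈ C, ‖v‖ = 1 ∧ ∀ δ : ℝ, 0 < δ → v - δ • x ∉ C := by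
  have hx_ne : x ≠ 0 := norm_ne_zero_iff.1 (by simp [hx.norm_eq_one])
  obtain ⟨z, hz⟩ := exists_linearIndependent_pair_of_one_lt_rank hE hx_ne
  set w := ‖z‖ • x + z with hw_def
  have hw : w ∈ C := ((hx z _).1 le_rfl).2
  set v := ‖w‖ • x - w with hv_def
  have hv : v ∈ C := ((hx w _).1 le_rfl).1
  have hv_ne : v ≠ 0 := by
    intro hv_zero
    have hcomb : (‖w‖ - ‖z‖) • x + (-1 : ℝ) • z = 0 := by
      rw [← hv_zero, hv_def, hw_def]
      module
    simpa using (LinearIndependent.pair_iff.1 hz _ _ hcomb).2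
  have hboundary (δ : ℝ) (hδ : 0 < δ) : v - δ • x ∉ C := by
    intro hmem
    have hle : ‖w‖ ≤ ‖w‖ - δ := by
      rw [hx.norm_le_iff_of_mem hw]
      convert hmem using 1
      module
    linarith
  have hv_norm : 0 < ‖v‖ := norm_pos_iff.2 hv_ne
  refine ⟨‖v‖⁻¹ • v, C.smul_mem (inv_pos.2 hv_norm) hv, norm_smul_inv_norm hv_ne, ?_⟩
  intro δ hδ hmem
  apply hboundary (‖v‖ * δ) (mul_pos hv_norm hδ)
  convert C.smul_mem hv_norm hmem using 1
  rw [smul_sub, smul_inv_smul₀ hv_norm.ne', smul_smul]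

end IsNormingOrderUnit

theorem stmt_7_general {C : ConvexCone ℝ E} {x : E} (hx : IsNormingOrderUnit C x)
    (hE : 1 < Module.rank ℝ E) :
    (∀ y : E, BJOrth y x → BJOrth x y) ∧
    (∀ ε ∈ Ico (0 : ℝ) 1, ∃ y : E, BJOrth x y ∧ ¬ BOrth ε y x) := by
  obtain ⟨v, hv, hv_norm, hboundary⟩ := hx.exists_boundary_norm_eq_one hE
  exact ⟨fun _ => hx.bjOrth_of_bjOrth,
    fun _ hε => ⟨v, hx.bjOrth_of_boundary hv hboundary, hx.not_bOrth hv hv_norm hε⟩⟩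

end OrderUnit

theorem isNormingOrderUnit_of_abs_eq_one {ι : Type*} [Fintype ι] [Nonempty ι] {x : ι → ℝ}
    (hx : ∀ i, |x i| = 1) :
    IsNormingOrderUnit ((ConvexCone.positive ℝ (ι → ℝ)).comap (LinearMap.mulLeft ℝ x)) x := by
  intro z r
  have hcoord (i : ι) : |z i| ≤ r ↔ 0 ≤ x i * (r * x i - z i) ∧ 0 ≤ x i * (r * x i + z i) := by
    obtain hi | hi := eq_or_eq_neg_of_abs_eq (hx i) <;> rw [hi, abs_le] <;> constructor <;>
      rintro ⟨_, _⟩ <;> constructor <;> linarith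
  simp [pi_norm_le_iff_of_nonempty, hcoord, Pi.le_def, forall_and]

theorem stmt_7 (n : ℕ) (hn : 2 ≤ n)
    (x : Fin n → ℝ) (hx : ∀ i : Fin n, |x i| = 1) :
    (∀ y : Fin n → ℝ, BJOrth y x → BJOrth x y) ∧
    (∀ ε ∈ Set.Ico (0 : ℝ) 1, ∃ y : Fin n → ℝ, BJOrth x y ∧ ¬ BOrth ε y x) := by
  have : NeZero n := ⟨by omega⟩
  exact stmt_7_general (isNormingOrderUnit_of_abs_eq_one hx) (by simpa using Nat.lt_of_succ_le hn)
end

section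
/- Let X be a finite-dimensional real Banach space and suppose that every extreme point of the closed unit ball of X has the local property (P). Then every y ∈ S_X has the local property (P). -/
/-!
Suppose that a unit vector `y` fails (P), with witness `z`. The points of the closed unit ball at
which every `f ∈ J(y)` attains its maximum form a face that contains `y`. If the ball is weakly
compact, then so is this face, and Krein–Milman gives it an extreme point `x`. Then `x` is an
extreme point of the ball and `J(y) ⊆ J(x)`. By James' characterization, `y ⊥_B z` means that some
`f ∈ J(y)` vanishes at `z`. Since `f ∈ J(x)`, also `x ⊥_B z`, so `z` shows that `x` fails (P).
-/

open Set Metric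

section ExtremePoints

variable {E : Type*} [AddCommGroup E] [Module ℝ E] [TopologicalSpace E] {K : Set E}

lemma isExtreme_setOf_forall_isMaxOn (K : Set E) (S : Set (StrongDual ℝ E)) :
    IsExtreme ℝ K {x ∈ K | ∀ f ∈ S, IsMaxOn f K x} :=
  ⟨sep_subset .., fun _ hu _ hv _ hw hwuv ↦ ⟨hu, fun f hf ↦
    ((ContinuousLinearMap.toExposed.isExposed (l := f)).isExtreme.2 hu hv
      ⟨hw.1, hw.2 f hf⟩ hwuv).2⟩⟩

lemma continuous_comp_toWeakSpace_symm (f : StrongDual ℝ E) :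
    Continuous fun w ↦ f ((toWeakSpace ℝ E).symm w) :=
  WeakBilin.eval_continuous _ f

variable [SeparatingDual ℝ E]

lemma extremePoints_nonempty_of_isCompact_image_toWeakSpace
    (hK : IsCompact (toWeakSpace ℝ E '' K)) (hne : K.Nonempty) :
    (K.extremePoints ℝ).Nonempty := by
  have : LocallyConvexSpace ℝ (WeakSpace ℝ E) :=
    inferInstanceAs (LocallyConvexSpace ℝ (WeakBilin (topDualPairing ℝ E).flip))
  have hext := hK.extremePoints_nonempty (hne.image _)
  rwa [← image_extremePoints, image_nonempty] at hext

lemma exists_mem_extremePoints_forall_isMaxOn (hK : IsCompact (toWeakSpace ℝ E '' K))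
    {S : Set (StrongDual ℝ E)} {y : E} (hy : y ∈ K) (hS : ∀ f ∈ S, IsMaxOn f K y) :
    ∃ x ∈ K.extremePoints ℝ, ∀ f ∈ S, IsMaxOn f K x := by
  set A : Set E := {x ∈ K | ∀ f ∈ S, IsMaxOn f K x}
  have hA : toWeakSpace ℝ E '' A =
      toWeakSpace ℝ E '' K ∩ ⋂ f ∈ S, {w | f y ≤ f ((toWeakSpace ℝ E).symm w)} := by
    ext w
    obtain ⟨x, rfl⟩ := (toWeakSpace ℝ E).surjective w
    simp only [(toWeakSpace ℝ E).injective.mem_set_image, mem_inter_iff, mem_iInter, mem_ofPred_eq,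
      LinearEquiv.symm_apply_apply, A]
    exact and_congr_right fun _ ↦ forall₂_congr fun f hf ↦
      ⟨fun hx ↦ hx hy, fun hyx u hu ↦ (hS f hf hu).trans hyx⟩
  have hclosed : IsClosed (⋂ f ∈ S, {w | f y ≤ f ((toWeakSpace ℝ E).symm w)}) :=
    isClosed_biInter fun f _ ↦ isClosed_le continuous_const (continuous_comp_toWeakSpace_symm f)
  have hAcompact : IsCompact (toWeakSpace ℝ E '' A) := hA ▸ hK.inter_right hclosed
  obtain ⟨x, hx⟩ := extremePoints_nonempty_of_isCompact_image_toWeakSpace hAcompact ⟨y, hy, hS⟩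
  exact ⟨x, (isExtreme_setOf_forall_isMaxOn K S).extremePoints_subset_extremePoints hx,
    (extremePoints_subset hx).2⟩

end ExtremePoints

section SupportingFunctionals

variable {X : Type*} [NormedAddCommGroup X] [NormedSpace ℝ X] {x y z : X} {f : StrongDual ℝ X}

lemma le_norm_of_mem_suppJ (hf : f ∈ SuppJ y) (x : X) : f x ≤ ‖x‖ :=
  (le_abs_self _).trans (f.le_of_opNorm_le hf.1.le x |>.trans_eq (one_mul _))

lemma isMaxOn_closedBall_of_mem_suppJ (hf : f ∈ SuppJ y) : IsMaxOn f (closedBall 0 ‖y‖) y :=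
  fun x hx ↦ (le_norm_of_mem_suppJ hf x).trans (hf.2.symm ▸ mem_closedBall_zero_iff.1 hx)

lemma mem_suppJ_of_norm_le (hf : f ∈ SuppJ y) (hxy : ‖x‖ ≤ ‖y‖) (hfxy : f y ≤ f x) :
    f ∈ SuppJ x :=
  ⟨hf.1, (le_norm_of_mem_suppJ hf x).antisymm (hxy.trans (hf.2 ▸ hfxy))⟩

lemma mem_suppJ_of_norm_le_one (hx : x ≠ 0) (hf : ‖f‖ ≤ 1) (hfx : f x = ‖x‖) : f ∈ SuppJ x := by
  refine ⟨hf.antisymm ?_, hfx⟩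
  have hfx_le : ‖x‖ ≤ ‖f‖ * ‖x‖ := by simpa [hfx] using f.le_opNorm x
  exact le_of_mul_le_mul_right (by rwa [one_mul]) (norm_pos_iff.2 hx)

lemma BJOrth.norm_mkQ_span_singleton (h : BJOrth x z) :
    ‖(Submodule.span ℝ {z}).mkQ x‖ = ‖x‖ := by
  refine (Submodule.Quotient.norm_mk_le _ x).antisymm ?_
  refine QuotientAddGroup.le_norm_iff.2 fun m hm ↦ ?_
  obtain ⟨t, ht⟩ := Submodule.mem_span_singleton.1 ((Submodule.Quotient.eq _).1 hm)
  simpa [ht] using h t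

/-- The nontrivial half of James' characterization of Birkhoff-James orthogonality, by Hahn-Banach
in the quotient by the line through `z`. -/
lemma BJOrth.exists_mem_suppJ_apply_eq_zero (h : BJOrth x z) (hx : x ≠ 0) :
    ∃ f ∈ SuppJ x, f z = 0 := by
  set L := Submodule.span ℝ {z}
  obtain ⟨g, hg, hgx⟩ := exists_dual_vector'' ℝ (L.mkQ x)
  have hnorm : ‖g.comp L.mkQL‖ ≤ 1 := ContinuousLinearMap.opNorm_le_bound _ zero_le_one fun w ↦
    (g.le_of_opNorm_le hg _).trans (by simpa using Submodule.Quotient.norm_mk_le L w)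
  have hz : L.mkQ z = 0 :=
    (Submodule.Quotient.mk_eq_zero L).2 (Submodule.mem_span_singleton_self z)
  exact ⟨g.comp L.mkQL, mem_suppJ_of_norm_le_one hx hnorm (hgx.trans h.norm_mkQ_span_singleton),
    (congrArg g hz).trans (map_zero g)⟩

lemma bjOrth_of_mem_suppJ (hf : f ∈ SuppJ x) (hfz : f z = 0) : BJOrth x z := fun t ↦ by
  simpa [hfz, hf.2] using le_norm_of_mem_suppJ hf (x + t • z)

lemma LocalP.of_suppJ_subset (hx : LocalP x) (hy : y ≠ 0) (hyx : SuppJ y ⊆ SuppJ x) :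
    LocalP y := by
  rintro ⟨z, hz, hyz, hJ⟩
  obtain ⟨f, hf, hfz⟩ := hyz.exists_mem_suppJ_apply_eq_zero hy
  exact hx ⟨z, hz, bjOrth_of_mem_suppJ (hyx hf) hfz,
    fun g hg ↦ (hJ g hg).imp (hyx ·) (hyx ·)⟩

lemma exists_mem_extremePoints_closedBall_suppJ_subset
    (hball : IsCompact (toWeakSpace ℝ X '' closedBall 0 ‖y‖)) :
    ∃ x ∈ extremePoints ℝ (closedBall (0 : X) ‖y‖), SuppJ y ⊆ SuppJ x := by
  have hy : y ∈ closedBall 0 ‖y‖ := by simp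
  obtain ⟨x, hx, hmax⟩ := exists_mem_extremePoints_forall_isMaxOn hball hy
    (S := SuppJ y) fun f hf ↦ isMaxOn_closedBall_of_mem_suppJ hf
  have hxy : ‖x‖ ≤ ‖y‖ := mem_closedBall_zero_iff.1 (extremePoints_subset hx)
  exact ⟨x, hx, fun f hf ↦ mem_suppJ_of_norm_le hf hxy (hmax f hf hy)⟩

end SupportingFunctionals

/-- Weak compactness of the closed unit ball means that `X` is reflexive. -/
theorem stmt_8_general {X : Type*} [NormedAddCommGroup X] [NormedSpace ℝ X]
    (hball : IsCompact (toWeakSpace ℝ X '' closedBall 0 1))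
    (hext : ∀ x ∈ extremePoints ℝ (closedBall (0 : X) 1), LocalP x) (y : X) (hy : ‖y‖ = 1) :
    LocalP y := by
  rw [← hy] at hball hext
  obtain ⟨x, hx, hyx⟩ := exists_mem_extremePoints_closedBall_suppJ_subset hball
  exact (hext x hx).of_suppJ_subset (norm_ne_zero_iff.1 (hy ▸ one_ne_zero)) hyx

theorem stmt_8 {X : Type*} [NormedAddCommGroup X] [NormedSpace ℝ X]
    [FiniteDimensional ℝ X]
    (hext : ∀ x ∈ Set.extremePoints ℝ (Metric.closedBall (0 : X) 1), LocalP x) :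
    ∀ y : X, ‖y‖ = 1 → LocalP y := by
  exact stmt_8_general ((isCompact_closedBall 0 1).image (toWeakSpaceCLM ℝ X).continuous) hext
end

section
/- Let X be a real normed linear space and let x, y be unit vectors in X with x ⊥_B^ε y for some ε ∈ [0,1). Then there exists δ ∈ (0, 1 − ε) such that x ⊥_B^{ε+δ} z for every unit vector z with ‖z − y‖ < δ. -/
/-!
For `x ≠ 0`, the relation `x ⊥_B^ε y` is equivalent to the linear bound
`‖x‖ - ε ‖t • y‖ ≤ ‖x + t • y‖` for all `t`. The norm is convex along the line through `x` in the
direction `y`, so it is enough to compare the two sides of the quadratic bound to first order at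
`t = 0`; the converse is obtained by squaring. The linear bound is stable under perturbation:
replacing `y` by `z` costs at most `|t| ‖z - y‖`.
-/

open Set Metric

section

open Filter Topology

variable {X : Type*} [NormedAddCommGroup X] [NormedSpace ℝ X] {ε : ℝ} {x y : X}

theorem norm_add_smul_le_of_mem_Icc (x v : X) {s : ℝ} (hs : s ∈ Icc 0 1) :
    ‖x + s • v‖ ≤ ‖x‖ - s * (‖x‖ - ‖x + v‖) := by
  have hconv := convexOn_univ_norm.2 (mem_univ x) (mem_univ (x + v))
    (sub_nonneg.2 hs.2) hs.1 (sub_add_cancel 1 s)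
  have hpoint : (1 - s) • x + s • (x + v) = x + s • v := by module
  rw [hpoint, smul_eq_mul, smul_eq_mul] at hconv
  linarith

theorem nonpos_of_forall_le_mul {a b : ℝ} (h : ∀ s ∈ Ioc (0 : ℝ) 1, a ≤ s * b) : a ≤ 0 := by
  have hlim : Tendsto (fun s : ℝ => s * b) (𝓝[>] 0) (𝓝 0) :=
    ((continuous_mul_const b).tendsto' 0 0 (zero_mul b)).mono_left nhdsWithin_le_nhds
  exact ge_of_tendsto hlim <| by filter_upwards [Ioc_mem_nhdsGT one_pos] using h

theorem BOrth.norm_sub_le_norm_add_smul (h : BOrth ε x y) (hx : x ≠ 0) (t : ℝ) :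
    ‖x‖ - ε * ‖t • y‖ ≤ ‖x + t • y‖ := by
  have hquad (s : ℝ) (hs : s ∈ Ioc 0 1) :
      ‖x‖ ^ 2 - 2 * ε * ‖x‖ * (s * ‖t • y‖) ≤ (‖x‖ - s * (‖x‖ - ‖x + t • y‖)) ^ 2 := by
    calc ‖x‖ ^ 2 - 2 * ε * ‖x‖ * (s * ‖t • y‖)
        = ‖x‖ ^ 2 - 2 * ε * ‖x‖ * ‖(s * t) • y‖ := by
          rw [mul_smul, norm_smul s, Real.norm_of_nonneg hs.1.le]
      _ ≤ ‖x + s • t • y‖ ^ 2 := smul_smul s t y ▸ h (s * t)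
      _ ≤ (‖x‖ - s * (‖x‖ - ‖x + t • y‖)) ^ 2 := by
          gcongr
          exact norm_add_smul_le_of_mem_Icc x (t • y) (Ioc_subset_Icc_self hs)
  have hfirst : 2 * ‖x‖ * (‖x‖ - ‖x + t • y‖ - ε * ‖t • y‖) ≤ 0 := by
    refine nonpos_of_forall_le_mul (b := (‖x‖ - ‖x + t • y‖) ^ 2) fun s hs => ?_
    refine le_of_mul_le_mul_left ?_ hs.1
    linarith [hquad s hs]
  have hslope : ‖x‖ - ‖x + t • y‖ - ε * ‖t • y‖ ≤ 0 :=
    nonpos_of_mul_nonpos_right hfirst (by positivity)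
  linarith

theorem sq_sub_two_mul_le_sq_of_sub_le {a b c : ℝ} (ha : 0 ≤ a) (h : a - b ≤ c) :
    a ^ 2 - 2 * (a * b) ≤ c ^ 2 := by
  rcases le_total b a with hba | hab
  · calc a ^ 2 - 2 * (a * b) ≤ (a - b) ^ 2 := by linarith [sub_sq a b, sq_nonneg b]
      _ ≤ c ^ 2 := by gcongr
  · calc a ^ 2 - 2 * (a * b) ≤ 0 := by
          linarith [mul_le_mul_of_nonneg_left hab ha, mul_self_nonneg a]
      _ ≤ c ^ 2 := sq_nonneg c

theorem BOrth.of_norm_sub_le_norm_add_smul (h : ∀ t : ℝ, ‖x‖ - ε * ‖t • y‖ ≤ ‖x + t • y‖) :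
    BOrth ε x y := fun t => by
  linarith [sq_sub_two_mul_le_sq_of_sub_le (norm_nonneg x) (h t)]

theorem BOrth.zero_left (ε : ℝ) (y : X) : BOrth ε 0 y := fun t => by
  simp only [norm_zero]
  linarith [sq_nonneg ‖0 + t • y‖]

theorem stmt_10_general {ε' : ℝ} {z : X} (h : BOrth ε x y)
    (hz : ε * ‖y‖ + ‖z - y‖ ≤ ε' * ‖z‖) : BOrth ε' x z := by
  rcases eq_or_ne x 0 with rfl | hx
  · exact BOrth.zero_left ε' z
  refine BOrth.of_norm_sub_le_norm_add_smul fun t => ?_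
  have hcost : ε * ‖t • y‖ + ‖t • (z - y)‖ ≤ ε' * ‖t • z‖ := by
    simp only [norm_smul]
    linarith [mul_le_mul_of_nonneg_left hz (norm_nonneg t)]
  have htriangle : ‖x + t • y‖ - ‖t • (z - y)‖ ≤ ‖x + t • z‖ := by
    have hsum : x + t • z = x + t • y + t • (z - y) := by module
    exact hsum ▸ norm_sub_le_norm_add _ _
  linarith [h.norm_sub_le_norm_add_smul hx t]

end

theorem stmt_10 {X : Type*} [NormedAddCommGroup X] [NormedSpace ℝ X]
    (x y : X) (hx : ‖x‖ = 1) (hy : ‖y‖ = 1)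
    (ε : ℝ) (hε : ε ∈ Set.Ico (0 : ℝ) 1) (h : BOrth ε x y) :
    ∃ δ ∈ Set.Ioo (0 : ℝ) (1 - ε),
      ∀ z : X, ‖z‖ = 1 → ‖z - y‖ < δ → BOrth (ε + δ) x z := by
  refine ⟨(1 - ε) / 2, ⟨by linarith [hε.2], by linarith [hε.2]⟩, fun z hz hzy => ?_⟩
  exact stmt_10_general h (by rw [hy, hz]; linarith)
end

section
/- Let X = ℝ² equipped with the supremum norm, let ε ∈ [0,1), and set x = (1,1) and y = (−1,−ε). Then x ⊥_B^ε y, but for every δ ∈ (0, 1 − ε) there exists a unit vector z with ‖z − x‖ < δ such that z ⊥_B^{ε+δ} y fails. (Thus C-approximate Birkhoff-James orthogonality is not stable under small perturbations of the first vector.) -/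
/-!
Approximate orthogonality `x ⊥_B^ε y` holds as soon as one supporting functional `f` of `x`
satisfies `|f y| ≤ ε ‖y‖`, whereas at a point where the norm is differentiable it forces this bound
on the derivative of the norm. In the plane with the supremum norm, both coordinate functionals
support `x = (1, 1)`, and the second one takes the value `-ε` at `y = (-1, -ε)`. Shrinking the
second coordinate of `x` gives a nearby point at which the norm is differentiable, with the first
coordinate functional as derivative; its value at `y` has absolute value `1 = ‖y‖`.
-/

open Set Metric

section ApproximateOrthogonality

variable {E : Type*} [NormedAddCommGroup E] [NormedSpace ℝ E] {ε d : ℝ} {x y : E}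

lemma BOrth.of_abs_apply_le {f : E →L[ℝ] ℝ} (hf : ‖f‖ ≤ 1) (hfx : f x = ‖x‖)
    (hfy : |f y| ≤ ε * ‖y‖) : BOrth ε x y := by
  intro t
  have hty : |f (t • y)| ≤ ε * ‖t • y‖ := by
    rw [map_smul, smul_eq_mul, abs_mul, norm_smul, Real.norm_eq_abs, mul_left_comm]
    gcongr
  have hle : |f (x + t • y)| ≤ ‖x + t • y‖ := by
    simpa only [one_mul, Real.norm_eq_abs] using f.le_of_opNorm_le hf (x + t • y)
  calc ‖x‖ ^ 2 - 2 * ε * ‖x‖ * ‖t • y‖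
      = ‖x‖ ^ 2 + 2 * ‖x‖ * -(ε * ‖t • y‖) := by ring
    _ ≤ ‖x‖ ^ 2 + 2 * ‖x‖ * f (t • y) := by gcongr; exact neg_le_of_abs_le hty
    _ ≤ f (x + t • y) ^ 2 := by
      rw [map_add, hfx, add_sq]
      exact le_add_of_nonneg_right (sq_nonneg _)
    _ ≤ ‖x + t • y‖ ^ 2 := sq_le_sq' (neg_le_of_abs_le hle) (le_of_abs_le hle)

lemma BOrth.smul_right (h : BOrth ε x y) (c : ℝ) : BOrth ε x (c • y) := fun t => by
  simpa only [mul_smul] using h (t * c)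

lemma BOrth.neg_mul_norm_le_of_hasLineDerivAt (h : BOrth ε x y) (hx : x ≠ 0)
    (hd : HasLineDerivAt ℝ (‖·‖) d x y) : -(ε * ‖y‖) ≤ d := by
  have hsq : HasLineDerivAt ℝ (fun z => ‖z‖ ^ 2) (2 * ‖x‖ * d) x y := by
    simpa only [HasLineDerivAt, zero_smul, add_zero, Nat.cast_ofNat, Nat.add_one_sub_one, pow_one]
      using HasDerivAt.fun_pow hd 2
  have hslope : ∀ t : ℝ, 0 < t → 2 * ‖x‖ * -(ε * ‖y‖) ≤ t⁻¹ • (‖x + t • y‖ ^ 2 - ‖x‖ ^ 2) := by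
    intro t ht
    have ht' := h t
    rw [norm_smul, Real.norm_of_nonneg ht.le] at ht'
    rw [smul_eq_mul, le_inv_mul_iff₀ ht]
    linarith
  have hlim : 2 * ‖x‖ * -(ε * ‖y‖) ≤ 2 * ‖x‖ * d :=
    ge_of_tendsto hsq.tendsto_slope_zero_right (eventually_nhdsWithin_of_forall hslope)
  exact le_of_mul_le_mul_left hlim (by positivity)

lemma BOrth.abs_le_of_hasLineDerivAt (h : BOrth ε x y) (hx : x ≠ 0)
    (hd : HasLineDerivAt ℝ (‖·‖) d x y) : |d| ≤ ε * ‖y‖ := by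
  have hneg := (h.smul_right (-1)).neg_mul_norm_le_of_hasLineDerivAt hx (hd.smul (-1))
  rw [neg_one_smul, norm_neg, neg_one_smul, neg_le_neg_iff] at hneg
  exact abs_le.2 ⟨h.neg_mul_norm_le_of_hasLineDerivAt hx hd, hneg⟩

end ApproximateOrthogonality

section SupNorm

variable {ι : Type*} [Fintype ι] {G : ι → Type*}

section Seminormed

variable [∀ j, SeminormedAddCommGroup (G j)] {x : ∀ j, G j} {i : ι}

lemma pi_norm_eq_of_forall_norm_le (h : ∀ j, ‖x j‖ ≤ ‖x i‖) : ‖x‖ = ‖x i‖ :=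
  le_antisymm ((pi_norm_le_iff_of_nonneg (norm_nonneg _)).2 h) (norm_le_pi_norm x i)

lemma eventually_pi_norm_eq_of_forall_norm_lt (h : ∀ j ≠ i, ‖x j‖ < ‖x i‖) :
    ∀ᶠ z in nhds x, ‖z‖ = ‖z i‖ := by
  have hle : ∀ j, ∀ᶠ z in nhds x, ‖z j‖ ≤ ‖z i‖ := by
    intro j
    rcases eq_or_ne j i with rfl | hj
    · exact .of_forall fun _ => le_rfl
    · exact ((continuous_apply j).norm.continuousAt.eventually_lt
        (continuous_apply i).norm.continuousAt (h j hj)).mono fun _ => le_of_lt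
  exact (Filter.eventually_all.2 hle).mono fun _ => pi_norm_eq_of_forall_norm_le

lemma norm_proj_le_one {𝕜 : Type*} [NontriviallyNormedField 𝕜] [∀ j, NormedSpace 𝕜 (G j)] (i : ι) :
    ‖(ContinuousLinearMap.proj i : (∀ j, G j) →L[𝕜] G i)‖ ≤ 1 :=
  ContinuousLinearMap.opNorm_le_bound _ zero_le_one fun z => by
    rw [one_mul]
    exact norm_le_pi_norm z i

end Seminormed

lemma hasFDerivAt_pi_norm_of_forall_norm_lt [∀ j, NormedAddCommGroup (G j)]
    [∀ j, NormedSpace ℝ (G j)] {x : ∀ j, G j} {i : ι} {g : G i →L[ℝ] ℝ}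
    (hg : HasFDerivAt (‖·‖) g (x i)) (h : ∀ j ≠ i, ‖x j‖ < ‖x i‖) :
    HasFDerivAt (‖·‖) (g ∘L ContinuousLinearMap.proj i) x :=
  (hg.comp x (hasFDerivAt_apply i x)).congr_of_eventuallyEq
    (eventually_pi_norm_eq_of_forall_norm_lt h)

end SupNorm

lemma norm_vec_two {F : Type*} [SeminormedAddGroup F] (a b : F) : ‖![a, b]‖ = max ‖a‖ ‖b‖ := by
  simp [Pi.norm_def, Fin.univ_succ]

theorem stmt_11 (ε : ℝ) (hε : ε ∈ Set.Ico (0 : ℝ) 1)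
    (x y : Fin 2 → ℝ) (hx : x = ![1, 1]) (hy : y = ![-1, -ε]) :
    BOrth ε x y ∧
    ∀ δ ∈ Set.Ioo (0 : ℝ) (1 - ε),
      ∃ z : Fin 2 → ℝ, ‖z‖ = 1 ∧ ‖z - x‖ < δ ∧ ¬ BOrth (ε + δ) z y := by
  subst hx hy
  obtain ⟨hε0, hε1⟩ := hε
  have hy : ‖![-1, -ε]‖ = 1 := by simp [norm_vec_two, abs_of_nonneg hε0, hε1.le]
  have hxy : BOrth ε ![1, 1] ![-1, -ε] := .of_abs_apply_le (f := .proj 1) (norm_proj_le_one 1)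
    (by simp [norm_vec_two]) (by simp [hy, abs_of_nonneg hε0])
  refine ⟨hxy, fun δ ⟨hδ0, hδ1⟩ => ?_⟩
  have habs : |1 - δ / 2| < 1 := abs_lt.2 ⟨by linarith, by linarith⟩
  have hz : ‖![1, 1 - δ / 2]‖ = 1 := by simp [norm_vec_two, habs.le]
  refine ⟨![1, 1 - δ / 2], hz, ?_, fun hzy => ?_⟩
  · simpa [norm_vec_two, abs_of_pos hδ0] using hδ0
  · have hderiv := hasFDerivAt_pi_norm_of_forall_norm_lt (x := ![1, 1 - δ / 2]) (i := 0)
      (hasDerivAt_abs_pos one_pos).hasFDerivAt (by simpa [Fin.forall_fin_two] using habs)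
    have hle := hzy.abs_le_of_hasLineDerivAt (norm_ne_zero_iff.1 (by simp [hz]))
      (hderiv.hasLineDerivAt _)
    have hge : 1 ≤ ε + δ := by simpa [hy] using hle
    linarith
end

section
/- Let X be a finite-dimensional polyhedral real Banach space satisfying property (P1): whenever the segment [x,y] is contained in S_X and x ⊥_B y, both x and y are extreme points of the closed unit ball of X. Then every x ∈ S_X has the local property (P). -/
/-!
Suppose `x ⊥_B y` violates the local property. Any `f ∈ J(y)` supports `x` or `-x`; replacing
`y` by `-y` if necessary, `f` supports both `x` and `y`, so it certifies that `[x, y]` lies in the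
unit sphere, and (P1) makes `y` an extreme point of the ball. The unit ball is a polytope, so `y`
can be strictly separated from the hull of the other extreme points and is therefore exposed, by
some `g ∈ J(y)`. But `g` also supports `x` or `-x`, which forces `y = x` or `y = -x`, and neither
is compatible with `x ⊥_B y`.
-/

open Set Metric

section ExposedPoints

lemma convex_insert_of_forall_openSegment_subset {𝕜 E : Type*} [Semiring 𝕜]
    [PartialOrder 𝕜] [ZeroLEOneClass 𝕜] [AddCommMonoid E] [Module 𝕜 E] {s : Set E} {x : E}
    (hs : Convex 𝕜 s) (hx : ∀ y ∈ s, openSegment 𝕜 x y ⊆ s) : Convex 𝕜 (insert x s) := by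
  rw [convex_iff_openSegment_subset]
  rintro y (rfl | hy) z (rfl | hz)
  · rintro _ ⟨a, b, -, -, hab, rfl⟩
    exact Or.inl (Convex.combo_self hab _)
  · exact (hx z hz).trans (subset_insert _ _)
  · exact openSegment_symm 𝕜 y z ▸ (hx y hy).trans (subset_insert _ _)
  · exact (hs.openSegment_subset hy hz).trans (subset_insert _ _)

lemma mem_exposedPoints_convexHull_of_forall_lt {𝕜 E : Type*} [TopologicalSpace 𝕜] [Ring 𝕜]
    [PartialOrder 𝕜] [IsStrictOrderedRing 𝕜] [AddCommMonoid E] [Module 𝕜 E] [TopologicalSpace E]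
    {s : Set E} {x : E} (hx : x ∈ s) (l : StrongDual 𝕜 E) (hl : ∀ y ∈ s, y ≠ x → l y < l x) :
    x ∈ (convexHull 𝕜 s).exposedPoints 𝕜 := by
  have hsegment : ∀ y, l y < l x → ∀ z ∈ openSegment 𝕜 x y, l z < l x := by
    rintro y hy _ ⟨a, b, -, hb, hab, rfl⟩
    calc l (a • x + b • y) = a * l x + b * l y := by simp
      _ < a * l x + b * l x := by gcongr
      _ = l x := by rw [← add_mul, hab, one_mul]
  have hconv : Convex 𝕜 (insert x {y | l y < l x}) :=
    convex_insert_of_forall_openSegment_subset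
      (convex_halfSpace_lt l.toLinearMap.isLinear (l x)) hsegment
  have hsub : convexHull 𝕜 s ⊆ insert x {y | l y < l x} :=
    convexHull_min (fun y hy => or_iff_not_imp_left.2 (hl y hy)) hconv
  refine ⟨subset_convexHull 𝕜 s hx, l, fun y hy => ?_⟩
  rcases hsub hy with rfl | hlt
  · exact ⟨le_rfl, fun _ => rfl⟩
  · exact ⟨hlt.le, fun hle => absurd hle hlt.not_ge⟩

variable {E : Type*} [AddCommGroup E] [Module ℝ E] [TopologicalSpace E] [T2Space E]
  [IsTopologicalAddGroup E] [ContinuousSMul ℝ E] [LocallyConvexSpace ℝ E] {K : Set E}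

lemma convexHull_extremePoints_eq_of_finite (hK : IsCompact K) (hconv : Convex ℝ K)
    (hfin : (K.extremePoints ℝ).Finite) : convexHull ℝ (K.extremePoints ℝ) = K := by
  rw [← (hfin.isClosed_convexHull ℝ).closure_eq, closure_convexHull_extremePoints hK hconv]

lemma extremePoints_subset_exposedPoints_of_finite (hK : IsCompact K) (hconv : Convex ℝ K)
    (hfin : (K.extremePoints ℝ).Finite) : K.extremePoints ℝ ⊆ K.exposedPoints ℝ := by
  intro x hx
  have hx_notMem : x ∉ convexHull ℝ (K.extremePoints ℝ \ {x}) := fun h =>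
    (hconv.mem_extremePoints_iff_mem_sdiff_convexHull_sdiff.1 hx).2
      (convexHull_mono (sdiff_subset_sdiff_left extremePoints_subset) h)
  obtain ⟨l, u, hlu, hux⟩ := geometric_hahn_banach_closed_point (convex_convexHull ℝ _)
    ((hfin.subset sdiff_subset).isClosed_convexHull ℝ) hx_notMem
  rw [← convexHull_extremePoints_eq_of_finite hK hconv hfin]
  exact mem_exposedPoints_convexHull_of_forall_lt hx l fun y hy hne =>
    (hlu y (subset_convexHull ℝ _ ⟨hy, hne⟩)).trans hux

end ExposedPoints

lemma norm_eq_of_isMaxOn_closedBall {E : Type*} [SeminormedAddCommGroup E] [NormedSpace ℝ E]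
    {f : StrongDual ℝ E} {y : E} (hy : ‖y‖ ≤ 1) (hmax : IsMaxOn f (closedBall 0 1) y) :
    ‖f‖ = f y := by
  have hle : ∀ z : E, ‖z‖ ≤ 1 → f z ≤ f y := fun z hz => hmax (mem_closedBall_zero_iff.2 hz)
  have hnonneg : 0 ≤ f y := by simpa using hle 0 (by simp)
  apply le_antisymm
  · refine f.opNorm_le_of_unit_norm hnonneg fun z hz => abs_le'.2 ⟨hle z hz.le, ?_⟩
    simpa using hle (-z) (by simp [hz])
  · exact (le_abs_self _).trans (f.unit_le_opNorm y hy)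

section Support

variable {E : Type*} [NormedAddCommGroup E] [NormedSpace ℝ E] {x y : E} {f : E →L[ℝ] ℝ}

lemma BJOrth.neg_right (h : BJOrth x y) : BJOrth x (-y) := fun t => by simpa using h (-t)

lemma not_bjOrth_self (hx : x ≠ 0) : ¬BJOrth x x := fun h => by
  simpa [hx] using h (-1)

lemma suppJ_nonempty (hx : x ≠ 0) : (SuppJ x).Nonempty :=
  exists_dual_vector ℝ x (norm_ne_zero_iff.2 hx)

lemma neg_mem_suppJ_neg : -f ∈ SuppJ (-x) ↔ f ∈ SuppJ x := by
  simp only [SuppJ, mem_ofPred_eq, norm_neg, neg_apply, map_neg, neg_neg]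

lemma segment_subset_sphere_of_mem_suppJ {r : ℝ} (hx : ‖x‖ = r) (hy : ‖y‖ = r)
    (hfx : f ∈ SuppJ x) (hfy : f ∈ SuppJ y) : segment ℝ x y ⊆ sphere 0 r := by
  intro z hz
  have hz_le : ‖z‖ ≤ r := mem_closedBall_zero_iff.1 <|
    (convex_closedBall (0 : E) r).segment_subset (by simp [hx]) (by simp [hy]) hz
  have hfz : f z = r := by
    obtain ⟨a, b, -, -, hab, rfl⟩ := hz
    simp [hfx.2, hfy.2, hx, hy, ← add_mul, hab]
  have hz_ge : r ≤ ‖z‖ :=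
    calc r = f z := hfz.symm
      _ ≤ ‖f‖ * ‖z‖ := (le_abs_self _).trans (f.le_opNorm z)
      _ = ‖z‖ := by rw [hfx.1, one_mul]
  exact mem_sphere_zero_iff_norm.2 (hz_le.antisymm hz_ge)

lemma exists_mem_suppJ_of_mem_exposedPoints (hy : ‖y‖ = 1)
    (hexp : y ∈ (closedBall (0 : E) 1).exposedPoints ℝ) :
    ∃ f ∈ SuppJ y, ∀ z, ‖z‖ ≤ 1 → f z = 1 → z = y := by
  obtain ⟨-, g, hg⟩ := hexp
  have hnorm : ‖g‖ = g y := norm_eq_of_isMaxOn_closedBall hy.le fun z hz => (hg z hz).1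
  have hg_ne : g ≠ 0 := by
    rintro rfl
    have : 0 = y := (hg 0 (by simp)).2 (by simp)
    simp [← this] at hy
  have hgy : g y ≠ 0 := hnorm ▸ norm_ne_zero_iff.2 hg_ne
  have hsupp : ‖g‖⁻¹ • g ∈ SuppJ y :=
    ⟨norm_smul_inv_norm (𝕜 := ℝ) hg_ne, by simp [hnorm, hgy, hy]⟩
  refine ⟨‖g‖⁻¹ • g, hsupp, fun z hz hfz => ?_⟩
  have hgz : g z = g y := by
    rwa [smul_apply, smul_eq_mul, hnorm, inv_mul_eq_one₀ hgy, eq_comm] at hfz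
  exact (hg z (mem_closedBall_zero_iff.2 hz)).2 hgz.ge

lemma eq_or_eq_neg_of_forall_mem_suppJ (hx : ‖x‖ = 1) (hy : ‖y‖ = 1)
    (hexp : y ∈ (closedBall (0 : E) 1).exposedPoints ℝ)
    (hJ : ∀ f ∈ SuppJ y, f ∈ SuppJ x ∨ -f ∈ SuppJ x) : y = x ∨ y = -x := by
  obtain ⟨f, hf, hf_unique⟩ := exists_mem_suppJ_of_mem_exposedPoints hy hexp
  refine (hJ f hf).imp (fun h => ?_) fun h => ?_
  · exact (hf_unique x hx.le (h.2.trans hx)).symm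
  · exact (hf_unique (-x) (by rw [norm_neg, hx]) (by simpa [hx] using h.2)).symm

end Support

theorem stmt_18_general {X : Type*} [NormedAddCommGroup X] [NormedSpace ℝ X] {x : X}
    (hx : ‖x‖ = 1)
    (hexp : ∀ y : X, segment ℝ x y ⊆ sphere 0 1 → BJOrth x y →
      y ∈ (closedBall (0 : X) 1).exposedPoints ℝ) :
    LocalP x := by
  rintro ⟨y, hy, hxy, hJ⟩
  obtain ⟨f, hfy⟩ := suppJ_nonempty (norm_ne_zero_iff.1 (hy ▸ one_ne_zero))
  wlog hfx : f ∈ SuppJ x generalizing y f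
  · have hJ_neg : ∀ g ∈ SuppJ (-y), g ∈ SuppJ x ∨ -g ∈ SuppJ x := fun g hg => by
      simpa [or_comm] using hJ (-g) (by simpa using neg_mem_suppJ_neg.2 hg)
    exact this (-y) (by rwa [norm_neg]) hxy.neg_right hJ_neg (-f) (neg_mem_suppJ_neg.2 hfy)
      ((hJ f hfy).resolve_left hfx)
  have hx_ne : x ≠ 0 := norm_ne_zero_iff.1 (hx ▸ one_ne_zero)
  have hy_exp := hexp y (segment_subset_sphere_of_mem_suppJ hx hy hfx hfy) hxy
  rcases eq_or_eq_neg_of_forall_mem_suppJ hx hy hy_exp hJ with rfl | rfl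
  · exact not_bjOrth_self hx_ne hxy
  · exact not_bjOrth_self hx_ne (by simpa using hxy.neg_right)

theorem stmt_18 {X : Type*} [NormedAddCommGroup X] [NormedSpace ℝ X]
    [FiniteDimensional ℝ X]
    (hpoly : (Set.extremePoints ℝ (Metric.closedBall (0 : X) 1)).Finite)
    (hP1 : ∀ x y : X, segment ℝ x y ⊆ Metric.sphere (0 : X) 1 → BJOrth x y →
      x ∈ Set.extremePoints ℝ (Metric.closedBall (0 : X) 1) ∧
      y ∈ Set.extremePoints ℝ (Metric.closedBall (0 : X) 1)) :
    ∀ x : X, ‖x‖ = 1 → LocalP x := by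
  have := FiniteDimensional.proper ℝ X
  exact fun x hx => stmt_18_general hx fun y hseg hxy =>
    extremePoints_subset_exposedPoints_of_finite (isCompact_closedBall 0 1)
      (convex_closedBall 0 1) hpoly (hP1 x y hseg hxy).2
end
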